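/- arXiv:2311.06387 — 3 statements merged into one kernel-verified Lean document; each statement's English description precedes it below -/
import Mathlib

section
/- Let P ⊆ Φ_{B_n} be a signed poset and let x lie in the topological interior of the root cone K^rt_P. Then ⟨x, χ_{J^w_m}⟩ > 0 for every w ∈ 𝓛(P) and every 1 ≤ m ≤ n, the function u ↦ e^{−⟨x,u⟩} is Lebesgue-integrable on the weight cone K^wt_P, and ∫_{K^wt_P} e^{−⟨x,u⟩} du = Σ_{w ∈ 𝓛(P)} ∏_{m=1}^n ⟨x, χ_{J^w_m}⟩^{−1}, the integral being with respect to Lebesgue measure on ℝ^n. -/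
open scoped Classical

noncomputable section

/-- Signed index set `±[n]`: `(true, i)` represents `+i`, `(false, i)` represents `-i`. -/
abbrev SIdx (n : ℕ) := Bool × Fin n

/-- Negation `a ↦ -a` on `±[n]`. -/
def negS {n : ℕ} (a : SIdx n) : SIdx n := (!a.1, a.2)

/-- Standard basis vector `e_i` of `ℝ^n`. -/
def stdB (n : ℕ) (i : Fin n) : Fin n → ℝ := Pi.single i 1

/-- `rsgn true = 1`, `rsgn false = -1`. -/
def rsgn (s : Bool) : ℝ := if s then 1 else -1

/-- `v(a)` for `a ∈ ±[n]`: `v(+i) = e_i`, `v(-i) = -e_i`. -/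
def vS {n : ℕ} (a : SIdx n) : Fin n → ℝ := rsgn a.1 • stdB n a.2

/-- `v` on `±[n] ∪ {0}` (with `none` playing the role of `0`). -/
def vO {n : ℕ} : Option (SIdx n) → (Fin n → ℝ)
  | none => 0
  | some a => vS a

/-- Negation on `±[n] ∪ {0}`, fixing `0`. -/
def negO {n : ℕ} : Option (SIdx n) → Option (SIdx n)
  | none => none
  | some a => some (negS a)

/-- Standard inner product on `ℝ^n`. -/
def dotR {n : ℕ} (x y : Fin n → ℝ) : ℝ := ∑ i, x i * y i

/-- The type `B_n` root system `Φ_{B_n}`. -/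
def BnRoots (n : ℕ) : Set (Fin n → ℝ) :=
  {α | (∃ i j : Fin n, i < j ∧ ∃ s t : Bool, α = rsgn s • stdB n i + rsgn t • stdB n j) ∨
    ∃ i : Fin n, ∃ s : Bool, α = rsgn s • stdB n i}

/-- The positive roots `Φ⁺_{B_n}`. -/
def BnPos (n : ℕ) : Set (Fin n → ℝ) :=
  {α | (∃ i j : Fin n, i < j ∧ ∃ t : Bool, α = stdB n i + rsgn t • stdB n j) ∨
    ∃ i : Fin n, α = stdB n i}

/-- The type `C_n` root system `Φ_{C_n}`. -/
def CnRoots (n : ℕ) : Set (Fin n → ℝ) :=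
  {α | (∃ i j : Fin n, i < j ∧ ∃ s t : Bool, α = rsgn s • stdB n i + rsgn t • stdB n j) ∨
    ∃ i : Fin n, ∃ s : Bool, α = (2 * rsgn s) • stdB n i}

/-- Nonnegative real linear combinations of elements of `S`. -/
def nnSpan {n : ℕ} (S : Set (Fin n → ℝ)) : Set (Fin n → ℝ) :=
  {x | ∃ (r : ℕ) (c : Fin r → ℝ) (β : Fin r → (Fin n → ℝ)),
    (∀ m, 0 ≤ c m) ∧ (∀ m, β m ∈ S) ∧ x = ∑ m, c m • β m}

/-- A signed poset: a subset of `Φ_{B_n}`, antisymmetric and closed under positive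
linear combinations remaining in `Φ_{B_n}`. -/
def IsSignedPoset (n : ℕ) (P : Set (Fin n → ℝ)) : Prop :=
  P ⊆ BnRoots n ∧ (∀ α ∈ P, -α ∉ P) ∧ ∀ α ∈ BnRoots n, α ∈ nnSpan P → α ∈ P

/-- A `C_n`-signed poset. -/
def IsCnSignedPoset (n : ℕ) (Q : Set (Fin n → ℝ)) : Prop :=
  Q ⊆ CnRoots n ∧ (∀ α ∈ Q, -α ∉ Q) ∧ ∀ α ∈ CnRoots n, α ∈ nnSpan Q → α ∈ Q

/-- The root cone `K^rt_P`. -/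
def rootCone {n : ℕ} (P : Set (Fin n → ℝ)) : Set (Fin n → ℝ) := nnSpan P

/-- The weight cone `K^wt_P`. -/
def weightCone {n : ℕ} (P : Set (Fin n → ℝ)) : Set (Fin n → ℝ) :=
  {f | ∀ α ∈ P, 0 ≤ dotR f α}

/-- The Fischer (strict) order on `±[n] ∪ {0}`:
`a < b` iff `v(a) - v(b) ∈ P`, or (`b = -a ≠ 0` and `v(a) ∈ P`). -/
def fLT {n : ℕ} (P : Set (Fin n → ℝ)) (a b : Option (SIdx n)) : Prop :=
  vO a - vO b ∈ P ∨ (a ≠ none ∧ b = negO a ∧ vO a ∈ P)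

/-- A subset of `±[n]` is isotropic if it contains no pair `{i, -i}`. -/
def Isotropic {n : ℕ} (J : Finset (SIdx n)) : Prop :=
  ∀ i : Fin n, ¬((true, i) ∈ J ∧ (false, i) ∈ J)

/-- Signed characteristic vector of a subset of `±[n]`. -/
def chiF {n : ℕ} (J : Finset (SIdx n)) : Fin n → ℝ := fun i =>
  if (true, i) ∈ J then 1 else if (false, i) ∈ J then -1 else 0

/-- `J` is an ideal of the signed poset `P`. -/
def IsIdeal {n : ℕ} (P : Set (Fin n → ℝ)) (J : Finset (SIdx n)) : Prop :=
  Isotropic J ∧ ∀ α ∈ P, 0 ≤ dotR (chiF J) α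

/-- Comparability in the Fischer order of `P`. -/
def fComp {n : ℕ} (P : Set (Fin n → ℝ)) (a b : SIdx n) : Prop :=
  fLT P (some a) (some b) ∨ fLT P (some b) (some a)

/-- One step in the comparability graph on a subset `J` of `±[n]`. -/
def connStep {n : ℕ} (P : Set (Fin n → ℝ)) (J : Finset (SIdx n)) (a b : SIdx n) : Prop :=
  a ∈ J ∧ b ∈ J ∧ fComp P a b

/-- `J` is connected: nonempty, and any two of its elements are joined by a path inside `J`
in the comparability graph of the Fischer order of `P`. -/
def IsConnectedIdl {n : ℕ} (P : Set (Fin n → ℝ)) (J : Finset (SIdx n)) : Prop :=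
  J.Nonempty ∧ ∀ a ∈ J, ∀ b ∈ J, Relation.ReflTransGen (connStep P J) a b

/-- A connected ideal of `P`. -/
def IsConnIdeal {n : ℕ} (P : Set (Fin n → ℝ)) (J : Finset (SIdx n)) : Prop :=
  IsIdeal P J ∧ IsConnectedIdl P J

/-- Support `supp J = {|a| : a ∈ J}`. -/
def suppF {n : ℕ} (J : Finset (SIdx n)) : Finset (Fin n) := J.image Prod.snd

/-- `J` and `K` intersect nontrivially. -/
def NontrivInter {n : ℕ} (J K : Finset (SIdx n)) : Prop :=
  (suppF J ∩ suppF K).Nonempty ∧ ¬J ⊆ K ∧ ¬K ⊆ J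

/-- `J` and `K` intersect trivially. -/
def TrivInter {n : ℕ} (J K : Finset (SIdx n)) : Prop := ¬NontrivInter J K

/-- A signed permutation, as an anti-symmetric bijection of `±[n]`. -/
def IsSPerm {n : ℕ} (w : SIdx n ≃ SIdx n) : Prop := ∀ a, w (negS a) = negS (w a)

/-- Linear action of a signed permutation on `ℝ^n`, determined by `w(e_i) = v(w(+i))`. -/
def spAct {n : ℕ} (w : SIdx n ≃ SIdx n) (x : Fin n → ℝ) : Fin n → ℝ :=
  ∑ i, x i • vS (w (true, i))

/-- `w` is a linear extension of `P`: a signed permutation with `P ⊆ w(Φ⁺_{B_n})`. -/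
def IsLinExt {n : ℕ} (P : Set (Fin n → ℝ)) (w : SIdx n ≃ SIdx n) : Prop :=
  IsSPerm w ∧ ∀ α ∈ P, ∃ β ∈ BnPos n, α = spAct w β

/-- The (finite) set `𝓛(P)` of linear extensions of `P`. -/
def linExts (n : ℕ) (P : Set (Fin n → ℝ)) : Finset (SIdx n ≃ SIdx n) :=
  Finset.univ.filter (IsLinExt P)

/-- Simple roots of `Φ_{B_n}`: `α_i = e_i - e_{i+1}` for `i < n - 1`, `α_{n-1} = e_{n-1}`
(0-indexed). -/
def simpleRoot (n : ℕ) (i : Fin n) : Fin n → ℝ := fun j =>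
  (if j = i then (1 : ℝ) else 0) - if (j : ℕ) = (i : ℕ) + 1 then 1 else 0

/-- `J^w_m = {w(1), …, w(m)}` (0-indexed: the images under `w` of `+1, …, +(m+1)`). -/
def JwSet {n : ℕ} (w : SIdx n ≃ SIdx n) (m : Fin n) : Finset (SIdx n) :=
  (Finset.univ.filter (fun j : Fin n => j ≤ m)).image (fun j => w (true, j))

/-- An extensible ideal of `P`. -/
def Extensible (n : ℕ) (P : Set (Fin n → ℝ)) (J : Finset (SIdx n)) : Prop :=
  ∃ I : Finset (SIdx n), I.Nonempty ∧ Disjoint I J ∧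
    IsIdeal P (J ∪ I) ∧ IsIdeal P (J ∪ I.image negS)

/-- The finite set `J_conn(P)` of connected ideals of `P`. -/
def JconnF (n : ℕ) (P : Set (Fin n → ℝ)) : Finset (Finset (SIdx n)) :=
  Finset.univ.filter (IsConnIdeal P)

/-- Membership in `Π(P)`: an unordered pair of nontrivially intersecting connected ideals. -/
def inPiP {n : ℕ} (P : Set (Fin n → ℝ)) (p : Sym2 (Finset (SIdx n))) : Prop :=
  ∃ J K : Finset (SIdx n),
    p = s(J, K) ∧ IsConnIdeal P J ∧ IsConnIdeal P K ∧ NontrivInter J K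

/-- The finite set `Π(P)` of unordered pairs of nontrivially intersecting connected ideals. -/
def PiP (n : ℕ) (P : Set (Fin n → ℝ)) : Finset (Sym2 (Finset (SIdx n))) :=
  Finset.univ.filter (inPiP P)

/-- No connected ideal of `P` intersects two or more other connected ideals nontrivially. -/
def NoDoubleNontriv (n : ℕ) (P : Set (Fin n → ℝ)) : Prop :=
  ∀ J K K' : Finset (SIdx n), IsConnIdeal P J → IsConnIdeal P K → IsConnIdeal P K' →
    NontrivInter J K → NontrivInter J K' → K = K'

/-- The connected component of `a` inside `J` (w.r.t. the Fischer comparability graph). -/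
def componentIn {n : ℕ} (P : Set (Fin n → ℝ)) (J : Finset (SIdx n)) (a : SIdx n) :
    Finset (SIdx n) :=
  J.filter (fun b => Relation.ReflTransGen (connStep P J) a b)

/-- The set of connected components of `J`. -/
def componentsOf {n : ℕ} (P : Set (Fin n → ℝ)) (J : Finset (SIdx n)) :
    Finset (Finset (SIdx n)) :=
  J.image (componentIn P J)

/-- The signed support `supp±(f) = {sgn(f_i)·i : f_i ≠ 0}` of a vector `f ∈ ℝ^n`. -/
def suppPM {n : ℕ} (f : Fin n → ℝ) : Finset (SIdx n) :=
  Finset.univ.filter (fun a : SIdx n => if a.1 then 0 < f a.2 else f a.2 < 0)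

/-- Index type for the variables `U_J`, `J` a connected ideal of `P`. -/
abbrev ConnIdx (n : ℕ) (P : Set (Fin n → ℝ)) := {J : Finset (SIdx n) // IsConnIdeal P J}

/-- Integer signed characteristic vector, as an exponent vector for Laurent monomials. -/
def chiZ {n : ℕ} (J : Finset (SIdx n)) : Fin n →₀ ℤ :=
  Finsupp.equivFunOnFinite.symm (fun i =>
    if (true, i) ∈ J then 1 else if (false, i) ∈ J then -1 else 0)

/-- The map `φ : k[U_J : J ∈ J_conn(P)] → k[x_1^{±1}, …, x_n^{±1}]`, `U_J ↦ x^{χ_J}`. -/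
def phiWt (n : ℕ) (P : Set (Fin n → ℝ)) (k : Type) [Field k] :
    MvPolynomial (ConnIdx n P) k →ₐ[k] AddMonoidAlgebra k (Fin n →₀ ℤ) :=
  MvPolynomial.aeval (fun J => AddMonoidAlgebra.single (chiZ J.val) 1)

/-- The binomial `syz(U_J, U_K) = U_J U_K - (∏_A U_A) (∏_B U_B)`, where `A` runs over the
connected components of `J ∩ K` and `B` over the connected components of `supp±(χ_J + χ_K)`. -/
def syzPoly (n : ℕ) (P : Set (Fin n → ℝ)) (k : Type) [Field k] (J K : ConnIdx n P) :
    MvPolynomial (ConnIdx n P) k :=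
  MvPolynomial.X J * MvPolynomial.X K -
    (∏ A ∈ Finset.univ.filter
        (fun A : ConnIdx n P => (A : Finset (SIdx n)) ∈ componentsOf P (J.val ∩ K.val)),
        MvPolynomial.X A) *
      ∏ B ∈ Finset.univ.filter
        (fun B : ConnIdx n P =>
          (B : Finset (SIdx n)) ∈ componentsOf P (suppPM (chiF J.val + chiF K.val))),
        MvPolynomial.X B

/-- `θ_1, …, θ_r` is a regular sequence: the ideal it generates is proper, and each `θ_{m+1}`
is a non-zero-divisor modulo the ideal generated by `θ_1, …, θ_m`. -/
def IsRegSeq {R : Type} [CommRing R] {r : ℕ} (θ : Fin r → R) : Prop :=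
  Ideal.span (Set.range θ) ≠ ⊤ ∧
    ∀ (m : ℕ) (hm : m < r) (x : R),
      θ ⟨m, hm⟩ * x ∈ Ideal.span (θ '' {j : Fin r | (j : ℕ) < m}) →
        x ∈ Ideal.span (θ '' {j : Fin r | (j : ℕ) < m})

/-- The induced signed poset `P_A = P ∩ span_ℝ{e_i : i ∈ A}`. -/
def inducedPoset (n : ℕ) (P : Set (Fin n → ℝ)) (A : Finset (Fin n)) : Set (Fin n → ℝ) :=
  {α | α ∈ P ∧ α ∈ Submodule.span ℝ (stdB n '' (A : Set (Fin n)))}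

/-- The major index of a signed permutation. -/
def majB {n : ℕ} (w : SIdx n ≃ SIdx n) : ℕ :=
  ∑ i ∈ Finset.univ.filter
      (fun i : Fin n => spAct w (simpleRoot n i) ∉ BnPos n), ((i : ℕ) + 1)

/-- `[m]_q = 1 + q + ⋯ + q^{m-1}` in `ℤ[q]`. -/
def qInt (m : ℕ) : Polynomial ℤ := ∑ t ∈ Finset.range m, Polynomial.X ^ t

/-- The symmetric function `{J, K} ↦ ⟨x, χ_J + χ_K⟩` on unordered pairs. -/
def pairDot {n : ℕ} (x : Fin n → ℝ) : Sym2 (Finset (SIdx n)) → ℝ :=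
  Sym2.lift ⟨fun J K => dotR x (chiF J + chiF K),
    fun J K => congrArg (dotR x) (add_comm (chiF J) (chiF K))⟩

/-- The symmetric function `{J, K} ↦ [|J| + |K|]_q` on unordered pairs. -/
def pairQ {n : ℕ} : Sym2 (Finset (SIdx n)) → Polynomial ℤ :=
  Sym2.lift ⟨fun J K => qInt (J.card + K.card),
    fun J K => congrArg qInt (Nat.add_comm J.card K.card)⟩

/-- The principal order ideal `I_≤(a)` in the Fischer order restricted to `±[n]`. -/
def Ile {n : ℕ} (P : Set (Fin n → ℝ)) (a : SIdx n) : Set (SIdx n) :=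
  {b | b = a ∨ fLT P (some b) (some a)}

/-- A set of signed indices is isotropic if it contains no pair `{i, -i}`. -/
def IsoSet {n : ℕ} (S : Set (SIdx n)) : Prop :=
  ∀ i : Fin n, ¬((true, i) ∈ S ∧ (false, i) ∈ S)

/-- A covering pair of the Fischer order of `P`. -/
def CovPair {n : ℕ} (P : Set (Fin n → ℝ)) (a b : Option (SIdx n)) : Prop :=
  fLT P a b ∧ ¬∃ c : Option (SIdx n), fLT P a c ∧ fLT P c b

/-- The set of covering roots of `P`. -/
def covRoots {n : ℕ} (P : Set (Fin n → ℝ)) : Set (Fin n → ℝ) :=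
  {x | ∃ a b : Option (SIdx n), CovPair P a b ∧ x = vO a - vO b}

/-- The set `J_ε = {i : ε_i = 1} ∪ {-i : ε_i = -1}` attached to a `{-1,0,1}`-vector. -/
def Jeps {n : ℕ} (ε : Fin n → ℝ) : Set (SIdx n) :=
  {a | (a.1 = true ∧ ε a.2 = 1) ∨ (a.1 = false ∧ ε a.2 = -1)}

open MeasureTheory

/-!
Off the hyperplanes orthogonal to the roots, `ℝ^n` is the disjoint union of the open Weyl chambers,
one for each signed permutation `w`. No root changes sign on a chamber, so a chamber that meets
`K^wt_P` is contained in it, and this happens exactly when `w` is a linear extension of `P`. The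
vectors `χ_{J^w_m}` form the basis dual to the simple roots transported by `w`; they have
determinant `±1` and generate the chamber of `w`, so in the coordinates they define the integral of
`e^{-⟨x,u⟩}` over the chamber factors into `∏ ⟨x, χ_{J^w_m}⟩⁻¹`. The factors are positive because
`χ_{J^w_m}` is a nonzero element of `K^wt_P` and `x` is interior to the dual cone `K^rt_P`.
-/

open Matrix Set

namespace SignedPoset

section SimplicialCone

variable {ι : Type*} [Fintype ι]

/-- The open simplicial cone spanned by the columns of a square matrix: the image of the open
positive orthant. -/
def simplicialCone (A : Matrix ι ι ℝ) : Set (ι → ℝ) :=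
  (A *ᵥ ·) '' univ.pi fun _ ↦ Ioi 0

lemma simplicialCone_eq_of_mul_eq_one [DecidableEq ι] {A B : Matrix ι ι ℝ} (hBA : B * A = 1) :
    simplicialCone A = {f | ∀ m, 0 < (B *ᵥ f) m} := by
  ext f
  constructor
  · rintro ⟨t, ht, rfl⟩ m
    simpa [mulVec_mulVec, hBA] using ht m trivial
  · intro hf
    exact ⟨B *ᵥ f, fun m _ ↦ hf m, by simp [mulVec_mulVec, mul_eq_one_comm.1 hBA]⟩

lemma exp_neg_dotProduct (c t : ι → ℝ) :
    Real.exp (-(c ⬝ᵥ t)) = ∏ m, Real.exp (-c m * t m) := by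
  simp [← Real.exp_sum, dotProduct]

lemma volume_restrict_pi_Ioi :
    (volume : Measure (ι → ℝ)).restrict (univ.pi fun _ ↦ Ioi 0) =
      Measure.pi fun _ ↦ volume.restrict (Ioi 0) := by
  rw [volume_pi, Measure.restrict_pi_pi]

lemma integrableOn_exp_neg_dotProduct_pi_Ioi {c : ι → ℝ} (hc : ∀ m, 0 < c m) :
    IntegrableOn (fun t ↦ Real.exp (-(c ⬝ᵥ t))) (univ.pi fun _ ↦ Ioi 0) := by
  simp only [IntegrableOn, exp_neg_dotProduct, volume_restrict_pi_Ioi]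
  exact Integrable.fintype_prod (f := fun m t ↦ Real.exp (-c m * t))
    fun m ↦ exp_neg_integrableOn_Ioi 0 (hc m)

lemma integral_exp_neg_dotProduct_pi_Ioi {c : ι → ℝ} (hc : ∀ m, 0 < c m) :
    ∫ t in univ.pi fun _ ↦ Ioi 0, Real.exp (-(c ⬝ᵥ t)) = ∏ m, (c m)⁻¹ := by
  simp only [exp_neg_dotProduct, volume_restrict_pi_Ioi]
  rw [integral_fintype_prod_eq_prod (f := fun m t ↦ Real.exp (-c m * t))]
  refine Finset.prod_congr rfl fun m _ ↦ ?_
  rw [integral_exp_mul_Ioi (neg_neg_of_pos (hc m))]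
  simp

variable [DecidableEq ι] {A : Matrix ι ι ℝ}

lemma hasFDerivWithinAt_mulVec (A : Matrix ι ι ℝ) (s : Set (ι → ℝ)) (t : ι → ℝ) :
    HasFDerivWithinAt (A *ᵥ ·) (toLin' A).toContinuousLinearMap s t :=
  (toLin' A).toContinuousLinearMap.hasFDerivWithinAt

lemma integrableOn_exp_neg_dotProduct_simplicialCone (hA : IsUnit A) {x : ι → ℝ}
    (hx : ∀ m, 0 < (x ᵥ* A) m) :
    IntegrableOn (fun u ↦ Real.exp (-(x ⬝ᵥ u))) (simplicialCone A) := by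
  rw [simplicialCone, integrableOn_image_iff_integrableOn_abs_det_fderiv_smul volume
    (MeasurableSet.univ_pi fun _ ↦ measurableSet_Ioi)
    (fun t _ ↦ hasFDerivWithinAt_mulVec A _ t) (mulVec_injective_of_isUnit hA).injOn]
  simp only [dotProduct_mulVec]
  exact (integrableOn_exp_neg_dotProduct_pi_Ioi hx).const_mul _

lemma integral_exp_neg_dotProduct_simplicialCone (hA : IsUnit A) {x : ι → ℝ}
    (hx : ∀ m, 0 < (x ᵥ* A) m) :
    ∫ u in simplicialCone A, Real.exp (-(x ⬝ᵥ u)) = |A.det| * ∏ m, ((x ᵥ* A) m)⁻¹ := by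
  rw [simplicialCone, integral_image_eq_integral_abs_det_fderiv_smul volume
    (MeasurableSet.univ_pi fun _ ↦ measurableSet_Ioi)
    (fun t _ ↦ hasFDerivWithinAt_mulVec A _ t) (mulVec_injective_of_isUnit hA).injOn]
  simp only [dotProduct_mulVec]
  rw [integral_smul, integral_exp_neg_dotProduct_pi_Ioi hx, smul_eq_mul,
    LinearMap.det_toContinuousLinearMap, LinearMap.det_toLin']

end SimplicialCone

section DualCones

variable {n : ℕ} {P : Set (Fin n → ℝ)} {c x : Fin n → ℝ}

lemma dotR_eq_dotProduct (x y : Fin n → ℝ) : dotR x y = x ⬝ᵥ y := rfl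

lemma dotR_nonneg_of_mem_rootCone (hc : c ∈ weightCone P) (hx : x ∈ rootCone P) :
    0 ≤ dotR c x := by
  obtain ⟨r, a, β, ha, hβ, rfl⟩ := hx
  simp only [dotR_eq_dotProduct, dotProduct_sum, dotProduct_smul]
  exact Finset.sum_nonneg fun m _ ↦ mul_nonneg (ha m) (hc _ (hβ m))

-- A nonzero linear functional is an open map, so it sends the interior of a set on which it is
-- nonnegative into the interior of `[0, ∞)`.
lemma dotR_pos_of_mem_interior_rootCone (hc : c ∈ weightCone P) (hc0 : c ≠ 0)
    (hx : x ∈ interior (rootCone P)) : 0 < dotR x c := by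
  let φ : (Fin n → ℝ) →ₗ[ℝ] ℝ := dotProductBilin ℝ ℝ c
  have hφ : Function.Surjective φ := by
    refine LinearMap.surjective fun h ↦ hc0 (dotProduct_eq_zero_iff.1 fun y ↦ ?_)
    exact LinearMap.congr_fun h y
  have hφP : φ '' rootCone P ⊆ Ici 0 := by
    rintro _ ⟨y, hy, rfl⟩
    exact dotR_nonneg_of_mem_rootCone hc hy
  have hφx : φ x ∈ interior (Ici 0) :=
    interior_mono hφP <|
      (φ.isOpenMap_of_finiteDimensional hφ).image_interior_subset _ (mem_image_of_mem φ hx)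
  rw [interior_Ici] at hφx
  rw [dotR_eq_dotProduct, dotProduct_comm]
  exact hφx

lemma ae_dotR_ne_zero {α : Fin n → ℝ} (hα : α ≠ 0) : ∀ᵐ f : Fin n → ℝ, dotR f α ≠ 0 := by
  have hker : LinearMap.ker (dotProductBilin ℝ ℝ α) ≠ ⊤ := fun h ↦
    hα <| dotProduct_eq_zero_iff.1 fun y ↦ LinearMap.congr_fun (LinearMap.ker_eq_top.1 h) y
  have hnull := Measure.addHaar_submodule volume _ hker
  rw [ae_iff]
  convert hnull using 2
  ext f
  simp [dotR_eq_dotProduct, dotProduct_comm f]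

end DualCones

section Roots

variable {n : ℕ}

lemma vS_negS (a : SIdx n) : vS (negS a) = -vS a := by
  rcases a with ⟨_ | _, i⟩ <;> simp [vS, negS, rsgn]

lemma vS_true (i : Fin n) : vS (true, i) = stdB n i := by simp [vS, rsgn]

lemma vS_apply (a : SIdx n) (i : Fin n) : vS a i = if i = a.2 then rsgn a.1 else 0 := by
  simp [vS, stdB, Pi.single_apply]

lemma dotR_vS (f : Fin n → ℝ) (a : SIdx n) : dotR f (vS a) = rsgn a.1 * f a.2 := by
  simp [dotR, vS_apply, mul_comm]

lemma dotR_vS_negS (f : Fin n → ℝ) (a : SIdx n) : dotR f (vS (negS a)) = -dotR f (vS a) := by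
  rw [vS_negS, dotR_eq_dotProduct, dotProduct_neg, dotR_eq_dotProduct]

lemma dotR_vS_vS (a b : SIdx n) :
    dotR (vS a) (vS b) = if a = b then 1 else if a = negS b then -1 else 0 := by
  obtain ⟨s, i⟩ := a
  obtain ⟨t, j⟩ := b
  cases s <;> cases t <;> simp [dotR_vS, vS_apply, negS, rsgn, eq_comm (a := j)]

lemma mem_BnRoots {α : Fin n → ℝ} :
    α ∈ BnRoots n ↔ (∃ a b : SIdx n, a.2 ≠ b.2 ∧ α = vS a + vS b) ∨ ∃ a : SIdx n, α = vS a := by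
  constructor
  · rintro (⟨i, j, hij, s, t, rfl⟩ | ⟨i, s, rfl⟩)
    · exact Or.inl ⟨(s, i), (t, j), hij.ne, rfl⟩
    · exact Or.inr ⟨(s, i), rfl⟩
  · rintro (⟨a, b, hab, rfl⟩ | ⟨a, rfl⟩)
    · rcases hab.lt_or_gt with hlt | hgt
      · exact Or.inl ⟨a.2, b.2, hlt, a.1, b.1, rfl⟩
      · exact Or.inl ⟨b.2, a.2, hgt, b.1, a.1, add_comm _ _⟩
    · exact Or.inr ⟨a.2, a.1, rfl⟩

lemma BnRoots_finite (n : ℕ) : (BnRoots n).Finite := by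
  refine ((finite_range fun p : SIdx n × SIdx n ↦ vS p.1 + vS p.2).union
    (finite_range vS)).subset fun α hα ↦ ?_
  rcases mem_BnRoots.1 hα with ⟨a, b, -, rfl⟩ | ⟨a, rfl⟩
  · exact Or.inl ⟨(a, b), rfl⟩
  · exact Or.inr ⟨a, rfl⟩

lemma ne_zero_of_mem_BnRoots {α : Fin n → ℝ} (hα : α ∈ BnRoots n) : α ≠ 0 := by
  rcases mem_BnRoots.1 hα with ⟨⟨s, i⟩, b, hab, rfl⟩ | ⟨⟨s, i⟩, rfl⟩ <;>
    refine Function.ne_iff.2 ⟨i, ?_⟩ <;> cases s <;> simp_all [vS_apply, rsgn]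

lemma ae_forall_BnRoots_dotR_ne_zero (n : ℕ) :
    ∀ᵐ f : Fin n → ℝ, ∀ α ∈ BnRoots n, dotR f α ≠ 0 :=
  (ae_ball_iff (BnRoots_finite n).countable).2 fun _ hα ↦
    ae_dotR_ne_zero (ne_zero_of_mem_BnRoots hα)

lemma mem_BnPos_or_neg_mem_BnPos {α : Fin n → ℝ} (hα : α ∈ BnRoots n) :
    α ∈ BnPos n ∨ -α ∈ BnPos n := by
  rcases hα with ⟨i, j, hij, _ | _, t, rfl⟩ | ⟨i, _ | _, rfl⟩
  · refine Or.inr (Or.inl ⟨i, j, hij, !t, ?_⟩)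
    cases t <;> simp [rsgn, add_comm]
  · exact Or.inl (Or.inl ⟨i, j, hij, t, by simp [rsgn]⟩)
  · exact Or.inr (Or.inr ⟨i, by simp [rsgn]⟩)
  · exact Or.inl (Or.inr ⟨i, by simp [rsgn]⟩)

variable {u β : Fin n → ℝ}

lemma dotR_stdB_add (u : Fin n → ℝ) (i j : Fin n) (t : Bool) :
    dotR u (stdB n i + rsgn t • stdB n j) = u i + rsgn t * u j := by
  simp [dotR_eq_dotProduct, dotProduct_add, stdB]

lemma dotR_stdB (u : Fin n → ℝ) (i : Fin n) : dotR u (stdB n i) = u i := by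
  simp [dotR_eq_dotProduct, stdB]

lemma dotR_nonneg_of_mem_BnPos (hu : Antitone u) (hu0 : ∀ i, 0 ≤ u i) (hβ : β ∈ BnPos n) :
    0 ≤ dotR u β := by
  rcases hβ with ⟨i, j, hij, t, rfl⟩ | ⟨i, rfl⟩
  · rw [dotR_stdB_add]
    cases t <;> simp only [rsgn] <;> grind [hu hij.le, hu0 i, hu0 j]
  · exact (hu0 i).trans_eq (dotR_stdB u i).symm

lemma dotR_pos_of_mem_BnPos (hu : StrictAnti u) (hu0 : ∀ i, 0 < u i) (hβ : β ∈ BnPos n) :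
    0 < dotR u β := by
  rcases hβ with ⟨i, j, hij, t, rfl⟩ | ⟨i, rfl⟩
  · rw [dotR_stdB_add]
    cases t <;> simp only [rsgn] <;> grind [hu hij, hu0 i, hu0 j]
  · exact (hu0 i).trans_eq (dotR_stdB u i).symm

lemma dotR_simpleRoot (u : Fin n → ℝ) (m : Fin n) :
    dotR u (simpleRoot n m) = u m - if h : (m : ℕ) + 1 < n then u ⟨m + 1, h⟩ else 0 := by
  simp only [dotR, simpleRoot, mul_sub, mul_ite, mul_one, mul_zero, Finset.sum_sub_distrib,
    Finset.sum_ite_eq', Finset.mem_univ, if_true]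
  congr 1
  split_ifs with hm
  · have hsucc (j : Fin n) : (j : ℕ) = m + 1 ↔ j = ⟨m + 1, hm⟩ := by simp [Fin.ext_iff]
    simp only [hsucc, Finset.sum_ite_eq', Finset.mem_univ, if_true]
  · exact Finset.sum_eq_zero fun j _ ↦ if_neg (by lia)

lemma strictAnti_and_pos_of_forall_dotR_simpleRoot_pos (hu : ∀ m, 0 < dotR u (simpleRoot n m)) :
    StrictAnti u ∧ ∀ i, 0 < u i := by
  cases n with
  | zero => exact ⟨Subsingleton.strictAnti u, fun i ↦ i.elim0⟩
  | succ k =>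
    have hanti : StrictAnti u := Fin.strictAnti_iff_succ_lt.2 fun i ↦ by
      simpa [dotR_simpleRoot, Fin.succ] using hu i.castSucc
    have hlast : 0 < u (Fin.last k) := by simpa [dotR_simpleRoot] using hu (Fin.last k)
    exact ⟨hanti, fun i ↦ hlast.trans_le (hanti.antitone (Fin.le_last i))⟩

lemma simpleRoot_mem_BnPos (m : Fin n) : simpleRoot n m ∈ BnPos n := by
  by_cases hm : (m : ℕ) + 1 < n
  · refine Or.inl ⟨m, ⟨m + 1, hm⟩, Fin.lt_def.2 (Nat.lt_succ_self _), false, ?_⟩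
    ext j
    simp [simpleRoot, stdB, rsgn, Pi.single_apply, Fin.ext_iff, sub_eq_add_neg]
  · refine Or.inr ⟨m, ?_⟩
    ext j
    simp [simpleRoot, stdB, Pi.single_apply, show (j : ℕ) ≠ m + 1 by lia]

/-- The basis `e_1 + ⋯ + e_m` of `ℝ^n` dual to the simple roots, indexed from `0`. -/
def fundCoweight (n : ℕ) (m : Fin n) : Fin n → ℝ := fun j ↦ if j ≤ m then 1 else 0

lemma antitone_fundCoweight (m : Fin n) : Antitone (fundCoweight n m) := by
  intro i j hij
  grind [fundCoweight]

lemma fundCoweight_nonneg (m i : Fin n) : 0 ≤ fundCoweight n m i := by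
  grind [fundCoweight]

lemma dotR_fundCoweight_simpleRoot (m k : Fin n) :
    dotR (fundCoweight n m) (simpleRoot n k) = if k = m then 1 else 0 := by
  rw [dotR_simpleRoot]
  simp only [fundCoweight, Fin.le_def, Fin.ext_iff]
  split_ifs <;> first | omega | norm_num

lemma det_of_fundCoweight (n : ℕ) : (of fun j m ↦ fundCoweight n m j).det = 1 := by
  rw [det_of_isUpperTriangular]
  · simp [fundCoweight]
  · intro i j hij
    exact if_neg (not_le.2 hij)

end Roots

section SignedPermutations

variable {n : ℕ} {w : SIdx n ≃ SIdx n}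

lemma apply_true_ne_negS_apply_true (hw : IsSPerm w) (i j : Fin n) :
    w (true, i) ≠ negS (w (true, j)) := by
  rw [← hw]
  exact fun h ↦ by simpa [negS] using w.injective h

lemma apply_false (hw : IsSPerm w) (i : Fin n) : w (false, i) = negS (w (true, i)) :=
  hw (true, i)

/-- The matrix of the linear action `spAct w`. -/
def signedPermMatrix (w : SIdx n ≃ SIdx n) : Matrix (Fin n) (Fin n) ℝ :=
  of fun i j ↦ vS (w (true, j)) i

lemma spAct_eq_mulVec (w : SIdx n ≃ SIdx n) (x : Fin n → ℝ) :
    spAct w x = signedPermMatrix w *ᵥ x := by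
  ext i
  simp [spAct, signedPermMatrix, mulVec, dotProduct, mul_comm]

lemma dotR_spAct (f x : Fin n → ℝ) :
    dotR f (spAct w x) = dotR (f ᵥ* signedPermMatrix w) x := by
  simp only [dotR_eq_dotProduct, spAct_eq_mulVec, dotProduct_mulVec]

lemma signedPermMatrix_mem_orthogonalGroup (hw : IsSPerm w) :
    signedPermMatrix w ∈ orthogonalGroup (Fin n) ℝ := by
  rw [mem_orthogonalGroup_iff']
  ext i j
  calc dotR (vS (w (true, i))) (vS (w (true, j)))
    _ = if w (true, i) = w (true, j) then 1 else 0 := by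
        rw [dotR_vS_vS, if_neg (apply_true_ne_negS_apply_true hw i j)]
    _ = (1 : Matrix (Fin n) (Fin n) ℝ) i j := by simp [one_apply]

lemma spAct_vS (hw : IsSPerm w) (a : SIdx n) : spAct w (vS a) = vS (w a) := by
  have spAct_stdB (i : Fin n) : spAct w (stdB n i) = vS (w (true, i)) := by
    rw [spAct_eq_mulVec, stdB, mulVec_single_one]
    rfl
  rcases a with ⟨_ | _, i⟩
  · rw [show ((false, i) : SIdx n) = negS (true, i) from rfl, hw, vS_negS, vS_negS, vS_true,
      ← spAct_stdB, spAct_eq_mulVec, mulVec_neg, spAct_eq_mulVec]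
  · rw [vS_true, spAct_stdB]

lemma snd_apply_eq_snd_apply_iff (hw : IsSPerm w) {a b : SIdx n} :
    (w a).2 = (w b).2 ↔ a.2 = b.2 := by
  have snd_eq_iff (a b : SIdx n) : a.2 = b.2 ↔ a = b ∨ a = negS b := by
    rcases a with ⟨_ | _, i⟩ <;> rcases b with ⟨_ | _, j⟩ <;> simp [negS]
  rw [snd_eq_iff, snd_eq_iff, ← hw, w.injective.eq_iff, w.injective.eq_iff]

lemma exists_mem_BnRoots_spAct_eq (hw : IsSPerm w) {α : Fin n → ℝ} (hα : α ∈ BnRoots n) :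
    ∃ β ∈ BnRoots n, spAct w β = α := by
  rcases mem_BnRoots.1 hα with ⟨a, b, hab, rfl⟩ | ⟨a, rfl⟩
  · refine ⟨vS (w.symm a) + vS (w.symm b), mem_BnRoots.2 (Or.inl ⟨_, _, ?_, rfl⟩), ?_⟩
    · rw [Ne, ← snd_apply_eq_snd_apply_iff hw]
      simpa using hab
    · rw [spAct_eq_mulVec, mulVec_add, ← spAct_eq_mulVec, ← spAct_eq_mulVec, spAct_vS hw,
        spAct_vS hw, w.apply_symm_apply, w.apply_symm_apply]
  · exact ⟨vS (w.symm a), mem_BnRoots.2 (Or.inr ⟨_, rfl⟩), by rw [spAct_vS hw, w.apply_symm_apply]⟩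

lemma dotR_spAct_spAct (hw : IsSPerm w) (x y : Fin n → ℝ) :
    dotR (spAct w x) (spAct w y) = dotR x y := by
  have horth : (signedPermMatrix w)ᵀ * signedPermMatrix w = 1 :=
    (mem_orthogonalGroup_iff' _ _).1 (signedPermMatrix_mem_orthogonalGroup hw)
  rw [dotR_spAct, spAct_eq_mulVec, ← vecMul_transpose, vecMul_vecMul, horth, vecMul_one]

lemma abs_det_signedPermMatrix (hw : IsSPerm w) : |(signedPermMatrix w).det| = 1 := by
  have hdet := det_of_mem_unitary (signedPermMatrix_mem_orthogonalGroup hw)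
  exact CStarRing.norm_of_mem_unitary hdet

lemma chiF_eq_sum_vS {J : Finset (SIdx n)} (hJ : Isotropic J) : chiF J = ∑ a ∈ J, vS a := by
  ext i
  have hsum : (∑ a ∈ J, vS a) i =
      (if (true, i) ∈ J then 1 else 0) + if (false, i) ∈ J then -1 else 0 := by
    rw [Finset.sum_apply, ← Finset.sum_ite_mem_eq J, Fintype.sum_prod_type, Fintype.sum_bool]
    rw [Finset.sum_eq_single i, Finset.sum_eq_single i] <;>
      simp +contextual [vS_apply, rsgn, eq_comm (a := i)]
  rw [hsum]
  grind [chiF, hJ i]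

lemma isotropic_JwSet (hw : IsSPerm w) (m : Fin n) : Isotropic (JwSet w m) := by
  rintro i ⟨hpos, hneg⟩
  obtain ⟨j, -, hj⟩ := Finset.mem_image.1 hpos
  obtain ⟨k, -, hk⟩ := Finset.mem_image.1 hneg
  refine apply_true_ne_negS_apply_true hw j k ?_
  rw [hj, hk]
  rfl

lemma chiF_JwSet (hw : IsSPerm w) (m : Fin n) :
    chiF (JwSet w m) = spAct w (fundCoweight n m) := by
  have hinj : Function.Injective fun j ↦ w (true, j) := fun i j h ↦ by simpa using h
  rw [chiF_eq_sum_vS (isotropic_JwSet hw m), JwSet, Finset.sum_image hinj.injOn,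
    Finset.sum_filter]
  simp [spAct, fundCoweight, ite_smul]

lemma dotR_chiF_JwSet_spAct_simpleRoot (hw : IsSPerm w) (m k : Fin n) :
    dotR (chiF (JwSet w m)) (spAct w (simpleRoot n k)) = if k = m then 1 else 0 := by
  rw [chiF_JwSet hw, dotR_spAct_spAct hw, dotR_fundCoweight_simpleRoot]

lemma chiF_JwSet_ne_zero (hw : IsSPerm w) (m : Fin n) : chiF (JwSet w m) ≠ 0 := by
  intro h
  simpa [h, dotR] using dotR_chiF_JwSet_spAct_simpleRoot hw m m

lemma chiF_JwSet_mem_weightCone {P : Set (Fin n → ℝ)} (hw : IsLinExt P w) (m : Fin n) :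
    chiF (JwSet w m) ∈ weightCone P := by
  intro α hα
  obtain ⟨β, hβ, rfl⟩ := hw.2 α hα
  rw [chiF_JwSet hw.1, dotR_spAct_spAct hw.1]
  exact dotR_nonneg_of_mem_BnPos (antitone_fundCoweight m) (fundCoweight_nonneg m) hβ

end SignedPermutations

section Chambers

variable {n : ℕ} {w w' : SIdx n ≃ SIdx n} {f : Fin n → ℝ}

/-- The open Weyl chamber of `w`: the vectors positive on the simple roots transported by `w`. -/
def openChamber (w : SIdx n ≃ SIdx n) : Set (Fin n → ℝ) :=
  {f | ∀ m, 0 < dotR f (spAct w (simpleRoot n m))}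

lemma mem_openChamber_iff :
    f ∈ openChamber w ↔
      StrictAnti (fun i ↦ dotR f (vS (w (true, i)))) ∧ ∀ i, 0 < dotR f (vS (w (true, i))) := by
  simp only [openChamber, mem_ofPred_eq, dotR_spAct]
  exact ⟨strictAnti_and_pos_of_forall_dotR_simpleRoot_pos,
    fun h m ↦ dotR_pos_of_mem_BnPos h.1 h.2 (simpleRoot_mem_BnPos m)⟩

lemma dotR_spAct_pos (hf : f ∈ openChamber w) {β : Fin n → ℝ} (hβ : β ∈ BnPos n) :
    0 < dotR f (spAct w β) := by
  obtain ⟨hanti, hpos⟩ := mem_openChamber_iff.1 hf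
  rw [dotR_spAct]
  exact dotR_pos_of_mem_BnPos hanti hpos hβ

lemma measurableSet_openChamber (w : SIdx n ≃ SIdx n) : MeasurableSet (openChamber w) := by
  have hcont (α : Fin n → ℝ) : Continuous fun f ↦ dotR f α := by
    unfold dotR
    fun_prop
  rw [openChamber, ofPred_forall]
  exact MeasurableSet.iInter fun m ↦ (isOpen_lt continuous_const (hcont _)).measurableSet

lemma openChamber_subset_weightCone {P : Set (Fin n → ℝ)} (hw : IsLinExt P w) :
    openChamber w ⊆ weightCone P := by
  intro f hf α hα
  obtain ⟨β, hβ, rfl⟩ := hw.2 α hα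
  exact (dotR_spAct_pos hf hβ).le

lemma isLinExt_of_mem_openChamber {P : Set (Fin n → ℝ)} (hP : P ⊆ BnRoots n) (hw : IsSPerm w)
    (hf : f ∈ openChamber w) (hfP : f ∈ weightCone P) : IsLinExt P w := by
  refine ⟨hw, fun α hα ↦ ?_⟩
  obtain ⟨β, hβ, rfl⟩ := exists_mem_BnRoots_spAct_eq hw (hP hα)
  refine ⟨β, (mem_BnPos_or_neg_mem_BnPos hβ).resolve_right fun hβneg ↦ ?_, rfl⟩
  have hlt := dotR_spAct_pos hf hβneg
  have hge := hfP _ hα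
  rw [dotR_spAct, dotR_eq_dotProduct] at hlt hge
  rw [dotProduct_neg] at hlt
  linarith

lemma injective_dotR_vS (hw : IsSPerm w) (hf : f ∈ openChamber w) :
    Function.Injective fun a ↦ dotR f (vS a) := by
  obtain ⟨hanti, hpos⟩ := mem_openChamber_iff.1 hf
  rw [← w.injective_comp]
  rintro ⟨_ | _, i⟩ ⟨_ | _, j⟩ h <;>
    simp only [Function.comp_apply, apply_false hw, dotR_vS_negS, neg_inj] at h
  · rw [hanti.injective h]
  · linarith [hpos i, hpos j]
  · linarith [hpos i, hpos j]
  · rw [hanti.injective h]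

lemma range_dotR_vS_apply_true (hw : IsSPerm w) (hf : f ∈ openChamber w) :
    range (fun i ↦ dotR f (vS (w (true, i)))) = range (fun a ↦ dotR f (vS a)) ∩ Ioi 0 := by
  have hpos := (mem_openChamber_iff.1 hf).2
  ext r
  constructor
  · rintro ⟨i, rfl⟩
    exact ⟨⟨_, rfl⟩, hpos i⟩
  · rintro ⟨⟨a, rfl⟩, ha⟩
    obtain ⟨⟨_ | _, i⟩, rfl⟩ := w.surjective a
    · simp only [mem_Ioi, apply_false hw, dotR_vS_negS] at ha
      linarith [hpos i]
    · exact ⟨i, rfl⟩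

-- On either chamber the values `⟨f, v (w i)⟩` list the positive `⟨f, v a⟩` in decreasing order.
lemma eq_of_mem_openChamber (hw : IsSPerm w) (hw' : IsSPerm w') (hf : f ∈ openChamber w)
    (hf' : f ∈ openChamber w') : w = w' := by
  have hcoords : (fun i ↦ dotR f (vS (w (true, i)))) = fun i ↦ dotR f (vS (w' (true, i))) := by
    refine ((mem_openChamber_iff.1 hf).1.range_inj (mem_openChamber_iff.1 hf').1).1 ?_
    rw [range_dotR_vS_apply_true hw hf, range_dotR_vS_apply_true hw' hf']
  have htrue (i : Fin n) : w (true, i) = w' (true, i) :=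
    injective_dotR_vS hw hf (congrFun hcoords i)
  ext1 ⟨s, i⟩
  cases s
  · rw [apply_false hw, apply_false hw', htrue]
  · exact htrue i

/-- The signed permutation with underlying permutation `σ` that maps `i` to `+σ(i)` if `ε i` and
to `-σ(i)` otherwise. -/
def signedPerm (σ : Equiv.Perm (Fin n)) (ε : Fin n → Bool) : SIdx n ≃ SIdx n :=
  (Equiv.prodComm _ _).trans <|
    (σ.prodShear fun i ↦ if ε i then Equiv.refl Bool else Equiv.boolNot).trans <|
      Equiv.prodComm _ _

lemma signedPerm_apply (σ : Equiv.Perm (Fin n)) (ε : Fin n → Bool) (a : SIdx n) :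
    signedPerm σ ε a = (a.1 == ε a.2, σ a.2) := by
  cases h : ε a.2 <;> simp [signedPerm, h]

lemma isSPerm_signedPerm (σ : Equiv.Perm (Fin n)) (ε : Fin n → Bool) :
    IsSPerm (signedPerm σ ε) := by
  rintro ⟨_ | _, i⟩ <;> simp [signedPerm_apply, negS]

lemma ne_zero_of_forall_BnRoots_dotR_ne_zero (hf : ∀ α ∈ BnRoots n, dotR f α ≠ 0) (i : Fin n) :
    f i ≠ 0 := by
  simpa [dotR_vS, rsgn] using hf (vS (true, i)) (mem_BnRoots.2 (Or.inr ⟨_, rfl⟩))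

lemma injective_abs_of_forall_BnRoots_dotR_ne_zero (hf : ∀ α ∈ BnRoots n, dotR f α ≠ 0) :
    Function.Injective fun i ↦ |f i| := by
  intro i j hij
  by_contra hne
  have hroot (t : Bool) : f i + rsgn t * f j ≠ 0 := by
    rw [← dotR_stdB_add, ← vS_true]
    exact hf _ (mem_BnRoots.2 (Or.inl ⟨(true, i), (t, j), hne, rfl⟩))
  rcases abs_eq_abs.1 hij with h | h
  · exact hroot false (by simp [rsgn, h])
  · exact hroot true (by simp [rsgn, h])

lemma exists_mem_openChamber (hf : ∀ α ∈ BnRoots n, dotR f α ≠ 0) :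
    ∃ w : SIdx n ≃ SIdx n, IsSPerm w ∧ f ∈ openChamber w := by
  let σ := Tuple.sort fun i ↦ -|f i|
  let w := signedPerm σ fun i ↦ decide (0 < f (σ i))
  have hcoord (i : Fin n) : dotR f (vS (w (true, i))) = |f (σ i)| := by
    rw [dotR_vS, signedPerm_apply]
    by_cases h : 0 < f (σ i)
    · simp [rsgn, h, abs_of_pos h]
    · simp [rsgn, h, abs_of_nonpos (not_lt.1 h)]
  have hσ : Antitone fun i ↦ |f (σ i)| := fun i j hij ↦
    neg_le_neg_iff.1 (Tuple.monotone_sort (fun i ↦ -|f i|) hij)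
  refine ⟨w, isSPerm_signedPerm _ _, mem_openChamber_iff.2 ?_⟩
  simp only [hcoord]
  exact ⟨hσ.strictAnti_of_injective
      ((injective_abs_of_forall_BnRoots_dotR_ne_zero hf).comp σ.injective),
    fun i ↦ abs_pos.2 (ne_zero_of_forall_BnRoots_dotR_ne_zero hf _)⟩

lemma weightCone_ae_eq_iUnion_openChamber {P : Set (Fin n → ℝ)} (hP : P ⊆ BnRoots n) :
    weightCone P =ᵐ[volume] ⋃ w ∈ linExts n P, openChamber w := by
  filter_upwards [ae_forall_BnRoots_dotR_ne_zero n] with f hf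
  refine propext (Iff.trans ?_ mem_iUnion₂.symm)
  constructor
  · intro hfP
    obtain ⟨w, hw, hfw⟩ := exists_mem_openChamber hf
    exact ⟨w, by simpa [linExts] using isLinExt_of_mem_openChamber hP hw hfw hfP, hfw⟩
  · rintro ⟨w, hw, hfw⟩
    exact openChamber_subset_weightCone (by simpa [linExts] using hw) hfw

/-- The matrix whose columns are the vectors `χ_{J^w_m}`, which generate the chamber of `w`. -/
def chamberMatrix (w : SIdx n ≃ SIdx n) : Matrix (Fin n) (Fin n) ℝ :=
  of fun i m ↦ chiF (JwSet w m) i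

lemma abs_det_chamberMatrix (hw : IsSPerm w) : |(chamberMatrix w).det| = 1 := by
  have hfactor :
      chamberMatrix w = signedPermMatrix w * of fun j m ↦ fundCoweight n m j := by
    ext i m
    simp only [chamberMatrix, of_apply, chiF_JwSet hw, spAct_eq_mulVec]
    rfl
  rw [hfactor, det_mul, det_of_fundCoweight, mul_one, abs_det_signedPermMatrix hw]

lemma isUnit_chamberMatrix (hw : IsSPerm w) : IsUnit (chamberMatrix w) := by
  rw [isUnit_iff_isUnit_det, isUnit_iff_ne_zero, ← abs_pos, abs_det_chamberMatrix hw]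
  exact one_pos

lemma simplicialCone_chamberMatrix (hw : IsSPerm w) :
    simplicialCone (chamberMatrix w) = openChamber w := by
  let B : Matrix (Fin n) (Fin n) ℝ := of fun k ↦ spAct w (simpleRoot n k)
  have hdual : B * chamberMatrix w = 1 := by
    ext k m
    rw [one_apply, ← dotR_chiF_JwSet_spAct_simpleRoot hw, dotR_eq_dotProduct, dotProduct_comm]
    rfl
  rw [simplicialCone_eq_of_mul_eq_one hdual]
  ext f
  refine forall_congr' fun k ↦ ?_
  rw [dotR_eq_dotProduct, dotProduct_comm]
  rfl

variable {x : Fin n → ℝ}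

lemma integrableOn_exp_neg_dotR_openChamber (hw : IsSPerm w)
    (hx : ∀ m, 0 < dotR x (chiF (JwSet w m))) :
    IntegrableOn (fun u ↦ Real.exp (-dotR x u)) (openChamber w) := by
  rw [← simplicialCone_chamberMatrix hw]
  exact integrableOn_exp_neg_dotProduct_simplicialCone (isUnit_chamberMatrix hw) hx

lemma integral_exp_neg_dotR_openChamber (hw : IsSPerm w)
    (hx : ∀ m, 0 < dotR x (chiF (JwSet w m))) :
    ∫ u in openChamber w, Real.exp (-dotR x u) = ∏ m, (dotR x (chiF (JwSet w m)))⁻¹ := by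
  have hint := integral_exp_neg_dotProduct_simplicialCone (isUnit_chamberMatrix hw) hx
  rw [simplicialCone_chamberMatrix hw, abs_det_chamberMatrix hw, one_mul] at hint
  exact hint

end Chambers

end SignedPoset

open SignedPoset in
theorem statement_3_general (n : ℕ) (P : Set (Fin n → ℝ)) (hP : P ⊆ BnRoots n)
    (x : Fin n → ℝ) (hx : x ∈ interior (rootCone P)) :
    (∀ w ∈ linExts n P, ∀ m : Fin n, 0 < dotR x (chiF (JwSet w m))) ∧
    IntegrableOn (fun u => Real.exp (-dotR x u)) (weightCone P) volume ∧
    ∫ u in weightCone P, Real.exp (-dotR x u) =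
      ∑ w ∈ linExts n P, ∏ m : Fin n, (dotR x (chiF (JwSet w m)))⁻¹ := by
  have hlin : ∀ w ∈ linExts n P, IsLinExt P w := fun w hw ↦ (Finset.mem_filter.1 hw).2
  have hpos : ∀ w ∈ linExts n P, ∀ m : Fin n, 0 < dotR x (chiF (JwSet w m)) := fun w hw m ↦
    dotR_pos_of_mem_interior_rootCone (chiF_JwSet_mem_weightCone (hlin w hw) m)
      (chiF_JwSet_ne_zero (hlin w hw).1 m) hx
  have hint : ∀ w ∈ linExts n P, IntegrableOn (fun u ↦ Real.exp (-dotR x u)) (openChamber w) :=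
    fun w hw ↦ integrableOn_exp_neg_dotR_openChamber (hlin w hw).1 (hpos w hw)
  have hdisj : (linExts n P : Set (SIdx n ≃ SIdx n)).PairwiseDisjoint openChamber :=
    fun w hw w' hw' hne ↦ disjoint_left.2 fun f hf hf' ↦
      hne (eq_of_mem_openChamber (hlin w hw).1 (hlin w' hw').1 hf hf')
  have hcover := weightCone_ae_eq_iUnion_openChamber hP
  refine ⟨hpos, ?_, ?_⟩
  · rw [integrableOn_congr_set_ae hcover, integrableOn_finset_iUnion]
    exact hint
  · rw [setIntegral_congr_set hcover,
      integral_biUnion_finset _ (fun w _ ↦ measurableSet_openChamber w) hdisj hint]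
    exact Finset.sum_congr rfl fun w hw ↦
      integral_exp_neg_dotR_openChamber (hlin w hw).1 (hpos w hw)

theorem statement_3 (n : ℕ) (hn : 1 ≤ n) (P : Set (Fin n → ℝ)) (hP : IsSignedPoset n P)
    (x : Fin n → ℝ) (hx : x ∈ interior (rootCone P)) :
    (∀ w ∈ linExts n P, ∀ m : Fin n, 0 < dotR x (chiF (JwSet w m))) ∧
    IntegrableOn (fun u => Real.exp (-dotR x u)) (weightCone P) volume ∧
    ∫ u in weightCone P, Real.exp (-dotR x u) =
      ∑ w ∈ linExts n P, ∏ m : Fin n, (dotR x (chiF (JwSet w m)))⁻¹ :=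
  statement_3_general n P hP.1 x hx
end
end

section
/- Let P ⊆ Φ_{B_n} be a signed poset whose ℝ-linear span is a proper subspace of ℝ^n. Then both associated rational-function sums vanish identically: (1) for every x ∈ ℝ^n with ⟨x, w(α_i)⟩ ≠ 0 for all w ∈ 𝓛(P) and all 1 ≤ i ≤ n, one has Σ_{w ∈ 𝓛(P)} ∏_{i=1}^n ⟨x, w(α_i)⟩^{−1} = 0; and (2) for every x ∈ ℝ^n with ⟨x, χ_{J^w_m}⟩ ≠ 0 for all w ∈ 𝓛(P) and all 1 ≤ m ≤ n, one has Σ_{w ∈ 𝓛(P)} ∏_{m=1}^n ⟨x, χ_{J^w_m}⟩^{−1} = 0. -/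
open scoped Classical

noncomputable section

/-!
Choose `v ≠ 0` orthogonal to `P`. Each summand expands into terms indexed by the walls of the
chamber `w`, that is, by the simple roots `α_i`, in such a way that the term at a wall with
`⟨v, w(α_i)⟩ = 0` vanishes. If `⟨v, w(α_i)⟩ ≠ 0`, then `w(α_i) ∉ P`, so the reflected chamber
`w s_i` is again a linear extension, and its `i`-th term is the negative of that of `w`; hence
everything cancels in pairs.

For the vectors `χ_{J^w_m} = w(ω_m)`, where the `ω_m` are dual to the simple roots, the expansion is
`⟨v, x⟩ = ∑ i, ⟨v, w(α_i)⟩ ⟨x, w(ω_i)⟩` divided by `∏ i, ⟨x, w(ω_i)⟩`. For the simple roots it is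
the partial fraction expansion of the product along the line through `x` in direction `v`. Both are
available for generic `x` only, and continuity extends the identities to all admissible `x`.
-/

section PartialFractions

variable {ι K : Type*} [Fintype ι] [DecidableEq ι] [Field K]

lemma eval_zero_basisDivisor_div {a b c d : K} (hb : b ≠ 0) (hd : d ≠ 0)
    (hdet : b * c - a * d ≠ 0) :
    (Lagrange.basisDivisor (a / b) (c / d)).eval 0 = b * c / (b * c - a * d) := by
  have node_sub : a / b - c / d = -(b * c - a * d) / (b * d) := by
    field_simp
    ring
  simp only [Lagrange.basisDivisor, node_sub, Polynomial.eval_mul, Polynomial.eval_C,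
    Polynomial.eval_sub, Polynomial.eval_X]
  field_simp
  ring

lemma erase_nonempty_of_apply_eq_zero {b : ι → K} {i : ι} (hi : b i = 0) (hb : ∃ j, b j ≠ 0) :
    (Finset.univ.erase i).Nonempty :=
  hb.imp fun j hj ↦ Finset.mem_erase.2 ⟨fun hji ↦ hj (hji ▸ hi), Finset.mem_univ j⟩

/-- Lagrange interpolation of the constant `1` at the nodes `a i / b i`, evaluated at `0`. The
determinants allow `b i = 0`, that is, nodes at infinity. -/
lemma sum_prod_mul_div_det_eq_one {a b : ι → K} (ha : ∀ i, a i ≠ 0) (hb : ∃ i, b i ≠ 0)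
    (hab : ∀ i j, i ≠ j → b i ≠ 0 → b i * a j - a i * b j ≠ 0) :
    ∑ i, ∏ j ∈ Finset.univ.erase i, b i * a j / (b i * a j - a i * b j) = 1 := by
  set S : Finset ι := {i | b i ≠ 0} with hS
  have mem_S {i : ι} : i ∈ S ↔ b i ≠ 0 := by simp [hS]
  have S_nonempty : S.Nonempty := hb.imp fun i hi ↦ mem_S.2 hi
  have node_injOn : Set.InjOn (fun i ↦ a i / b i) S := by
    intro i hi j hj hij
    by_contra hne
    refine hab i j hne (mem_S.1 hi) ?_
    rw [div_eq_div_iff (mem_S.1 hi) (mem_S.1 hj)] at hij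
    linear_combination -hij
  have basis_eval (i : ι) (hi : i ∈ S) :
      (Lagrange.basis S (fun i ↦ a i / b i) i).eval 0 =
        ∏ j ∈ Finset.univ.erase i, b i * a j / (b i * a j - a i * b j) := by
    rw [Lagrange.basis, Polynomial.eval_prod]
    refine Finset.prod_subset_one_on_sdiff (Finset.erase_subset_erase i S.subset_univ)
      (fun j hj ↦ ?_) fun j hj ↦ ?_
    · have hbj : b j = 0 := by grind
      simp [hbj, ha j, mem_S.1 hi]
    · exact eval_zero_basisDivisor_div (mem_S.1 hi) (mem_S.1 (Finset.mem_of_mem_erase hj))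
        (hab i j (Finset.ne_of_mem_erase hj).symm (mem_S.1 hi))
  have term_eq_zero (i : ι) (hi : i ∉ S) :
      ∏ j ∈ Finset.univ.erase i, b i * a j / (b i * a j - a i * b j) = 0 := by
    have hbi : b i = 0 := not_not.1 (mem_S.not.1 hi)
    obtain ⟨j, hj⟩ := erase_nonempty_of_apply_eq_zero hbi hb
    exact Finset.prod_eq_zero hj (by simp [hbi])
  rw [← Finset.sum_subset S.subset_univ fun i _ hi ↦ term_eq_zero i hi,
    ← Finset.sum_congr rfl basis_eval, ← Polynomial.eval_finsetSum,
    Lagrange.sum_basis node_injOn S_nonempty, Polynomial.eval_one]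

lemma prod_inv_eq_sum_inv_mul_prod_div_det {a b : ι → K} (ha : ∀ i, a i ≠ 0) (hb : ∃ i, b i ≠ 0)
    (hab : ∀ i j, i ≠ j → b i ≠ 0 → b i * a j - a i * b j ≠ 0) :
    ∏ i, (a i)⁻¹ =
      ∑ i, (a i)⁻¹ * ∏ j ∈ Finset.univ.erase i, b i / (b i * a j - a i * b j) := by
  rw [← mul_one (∏ i, (a i)⁻¹), ← sum_prod_mul_div_det_eq_one ha hb hab, Finset.mul_sum]
  refine Finset.sum_congr rfl fun i _ ↦ ?_
  rw [← Finset.mul_prod_erase Finset.univ _ (Finset.mem_univ i), mul_assoc,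
    ← Finset.prod_mul_distrib]
  congr 1
  refine Finset.prod_congr rfl fun j _ ↦ ?_
  rw [mul_comm (b i), mul_div_assoc, inv_mul_cancel_left₀ (ha j)]

end PartialFractions

section WallCrossing

lemma sum_eq_zero_of_map_eq_neg {W M : Type*} [AddCommGroup M] [IsAddTorsionFree M]
    {L : Finset W} {g : W → W} (hg : Function.Involutive g) {f : W → M}
    (hmem : ∀ w ∈ L, f w ≠ 0 → g w ∈ L) (hneg : ∀ w ∈ L, f w ≠ 0 → f (g w) = -f w) :
    ∑ w ∈ L, f w = 0 := by
  rw [← Finset.sum_filter_ne_zero]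
  refine Finset.sum_involution (fun w _ ↦ g w) ?_ ?_ ?_ fun w _ ↦ hg w
  all_goals
    intro w hw
    obtain ⟨hwL, hfw⟩ := Finset.mem_filter.1 hw
    have hgw := hneg w hwL hfw
  · simp only [hgw, add_neg_cancel]
  · exact fun _ hfix ↦ hfw (self_eq_neg.1 (by rwa [hfix] at hgw))
  · exact Finset.mem_filter.2 ⟨hmem w hwL hfw, by simpa [hgw] using hfw⟩

variable {W ι K : Type*} [Field K]

/-- Wall crossings in a finite family `L` of chambers: `s i w` is the chamber on the other side of
the `i`-th wall of `w`, and `b w i` is the value of a fixed functional on the root of that wall.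
Only walls on whose root the functional vanishes may lie on the boundary of `L`. -/
structure IsWallCrossing (L : Finset W) (s : ι → W → W) (b : W → ι → K) : Prop where
  involutive : ∀ i, Function.Involutive (s i)
  mem : ∀ w ∈ L, ∀ i, b w i ≠ 0 → s i w ∈ L
  neg : ∀ w ∈ L, ∀ i, b (s i w) i = -b w i

namespace IsWallCrossing

variable [Fintype ι] {L : Finset W} {s : ι → W → W} {a b : W → ι → K}

lemma sum_sum_eq_zero {M : Type*} [AddCommGroup M] [IsAddTorsionFree M]
    (h : IsWallCrossing L s b) {f : W → ι → M} (hzero : ∀ w ∈ L, ∀ i, b w i = 0 → f w i = 0)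
    (hneg : ∀ w ∈ L, ∀ i, b w i ≠ 0 → f (s i w) i = -f w i) :
    ∑ w ∈ L, ∑ i, f w i = 0 := by
  rw [Finset.sum_comm]
  refine Finset.sum_eq_zero fun i _ ↦ ?_
  have hb : ∀ w ∈ L, f w i ≠ 0 → b w i ≠ 0 := fun w hw ↦ mt (hzero w hw i)
  exact sum_eq_zero_of_map_eq_neg (h.involutive i) (fun w hw hf ↦ h.mem w hw i (hb w hw hf))
    fun w hw hf ↦ hneg w hw i (hb w hw hf)

variable [CharZero K]

/-- The `i`-th terms of the partial fraction expansions of two chambers sharing their `i`-th wall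
are opposite, since a shear preserves the determinants up to sign. -/
theorem sum_prod_inv_eq_zero_of_shear (h : IsWallCrossing L s b)
    (hneg : ∀ w ∈ L, ∀ i, a (s i w) i = -a w i)
    (hshear : ∀ w ∈ L, ∀ i j, i ≠ j → ∃ c : K,
      a (s i w) j = a w j - c * a w i ∧ b (s i w) j = b w j - c * b w i)
    (ha : ∀ w ∈ L, ∀ i, a w i ≠ 0) (hb : ∀ w ∈ L, ∃ i, b w i ≠ 0)
    (hab : ∀ w ∈ L, ∀ i j, i ≠ j → b w i ≠ 0 → b w i * a w j - a w i * b w j ≠ 0) :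
    ∑ w ∈ L, ∏ i, (a w i)⁻¹ = 0 := by
  rw [Finset.sum_congr rfl fun w hw ↦
    prod_inv_eq_sum_inv_mul_prod_div_det (ha w hw) (hb w hw) (hab w hw)]
  refine h.sum_sum_eq_zero (fun w hw i hi ↦ ?_) fun w hw i _ ↦ ?_
  · obtain ⟨j, hj⟩ := erase_nonempty_of_apply_eq_zero hi (hb w hw)
    rw [Finset.prod_eq_zero hj (by simp [hi]), mul_zero]
  · rw [hneg w hw, h.neg w hw, inv_neg, neg_mul]
    congr 2
    refine Finset.prod_congr rfl fun j hj ↦ ?_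
    obtain ⟨c, haj, hbj⟩ := hshear w hw i j (Finset.ne_of_mem_erase hj).symm
    have hdet : -b w i * (a w j - c * a w i) - -a w i * (b w j - c * b w i) =
        -(b w i * a w j - a w i * b w j) := by ring
    rw [haj, hbj, hdet, neg_div_neg_eq]

theorem sum_prod_inv_eq_zero_of_sum_mul_eq (h : IsWallCrossing L s b) {p : W → ι → K} {c : K}
    (hc : c ≠ 0) (hsum : ∀ w ∈ L, ∑ i, b w i * p w i = c)
    (hinv : ∀ w ∈ L, ∀ i j, i ≠ j → p (s i w) j = p w j) (hp : ∀ w ∈ L, ∀ i, p w i ≠ 0) :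
    ∑ w ∈ L, ∏ i, (p w i)⁻¹ = 0 := by
  have expand : ∀ w ∈ L,
      c * ∏ i, (p w i)⁻¹ = ∑ i, b w i * ∏ j ∈ Finset.univ.erase i, (p w j)⁻¹ := by
    intro w hw
    rw [← hsum w hw, Finset.sum_mul]
    refine Finset.sum_congr rfl fun i _ ↦ ?_
    rw [← Finset.mul_prod_erase Finset.univ _ (Finset.mem_univ i), mul_assoc,
      mul_inv_cancel_left₀ (hp w hw i)]
  refine (mul_eq_zero.1 ?_).resolve_left hc
  rw [Finset.mul_sum, Finset.sum_congr rfl expand]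
  refine h.sum_sum_eq_zero (fun w _ i hi ↦ by rw [hi, zero_mul]) fun w hw i _ ↦ ?_
  rw [h.neg w hw, neg_mul]
  congr 2
  exact Finset.prod_congr rfl fun j hj ↦ by rw [hinv w hw i j (Finset.ne_of_mem_erase hj).symm]

end IsWallCrossing

end WallCrossing

section Genericity

lemma eq_of_eventually_residual_eq {X Y : Type*} [TopologicalSpace X] [BaireSpace X]
    [TopologicalSpace Y] [T1Space Y] {f : X → Y} {x : X} {y : Y} (hf : ContinuousAt f x)
    (h : ∀ᶠ z in residual X, f z = y) : f x = y := by
  have hx : f x ∈ closure {y} :=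
    hf.continuousWithinAt.mem_closure (dense_of_mem_residual h x) fun _ hz ↦ hz
  simpa using hx

lemma eventually_residual_apply_ne_zero {E : Type*} [NormedAddCommGroup E] [NormedSpace ℝ E]
    {φ : E →L[ℝ] ℝ} (hφ : φ ≠ 0) : ∀ᶠ z in residual E, φ z ≠ 0 :=
  residual_of_dense_open (isOpen_ne.preimage φ.continuous)
    ((dense_compl_singleton 0).preimage (φ.isOpenMap_of_ne_zero hφ))

variable {W ι κ : Type*} [Fintype ι] [Fintype κ]

lemma eventually_residual_dotProduct_ne_zero {u : κ → ℝ} (hu : u ≠ 0) :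
    ∀ᶠ z in residual (κ → ℝ), z ⬝ᵥ u ≠ 0 := by
  set φ : (κ → ℝ) →L[ℝ] ℝ := ((dotProductBilin ℝ ℝ).flip u).toContinuousLinearMap
  have hφ : φ ≠ 0 := fun h ↦ hu (dotProduct_self_eq_zero.1 (DFunLike.congr_fun h u))
  exact eventually_residual_apply_ne_zero hφ

lemma sum_prod_inv_dotProduct_eq_zero_of_eventually_residual {L : Finset W} {α : W → ι → κ → ℝ}
    {x : κ → ℝ} (hx : ∀ w ∈ L, ∀ i, x ⬝ᵥ α w i ≠ 0)
    (h : ∀ᶠ z in residual (κ → ℝ),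
      (∀ w ∈ L, ∀ i, z ⬝ᵥ α w i ≠ 0) → ∑ w ∈ L, ∏ i, (z ⬝ᵥ α w i)⁻¹ = 0) :
    ∑ w ∈ L, ∏ i, (x ⬝ᵥ α w i)⁻¹ = 0 := by
  have denominators_ne_zero : ∀ᶠ z in residual (κ → ℝ), ∀ w ∈ L, ∀ i, z ⬝ᵥ α w i ≠ 0 := by
    simp only [Filter.eventually_all_finset, Filter.eventually_all]
    intro w hw i
    refine eventually_residual_dotProduct_ne_zero fun hα ↦ hx w hw i ?_
    rw [hα, dotProduct_zero]
  have hcont : ContinuousAt (fun z ↦ ∑ w ∈ L, ∏ i, (z ⬝ᵥ α w i)⁻¹) x :=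
    tendsto_finsetSum _ fun w hw ↦ tendsto_finsetProd _ fun i _ ↦
      (Continuous.dotProduct continuous_id continuous_const).continuousAt.inv₀ (hx w hw i)
  refine eq_of_eventually_residual_eq (f := fun z ↦ ∑ w ∈ L, ∏ i, (z ⬝ᵥ α w i)⁻¹) hcont ?_
  filter_upwards [denominators_ne_zero, h] with z hz hsum using hsum hz

end Genericity

section DotProduct

variable {κ : Type*} [Fintype κ]

lemma exists_ne_zero_forall_dotProduct_eq_zero {K : Type*} [Field K] {P : Set (κ → K)}
    (hspan : Submodule.span K P ≠ ⊤) : ∃ v : κ → K, v ≠ 0 ∧ ∀ α ∈ P, v ⬝ᵥ α = 0 := by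
  obtain ⟨f, hf, hker⟩ := Submodule.exists_le_ker_of_lt_top _ hspan.lt_top
  refine ⟨(dotProductEquiv K κ).symm f, by simpa using hf, fun α hα ↦ ?_⟩
  have hfα : f α = 0 := hker (Submodule.subset_span hα)
  rw [← hfα]
  exact DFunLike.congr_fun ((dotProductEquiv K κ).apply_symm_apply f) α

lemma sum_dotProduct_mul_dotProduct_of_biorthogonal {R : Type*} [CommRing R] [DecidableEq κ]
    {p q : κ → κ → R} (h : ∀ i j, p i ⬝ᵥ q j = if i = j then 1 else 0) (u v : κ → R) :
    ∑ i, (u ⬝ᵥ q i) * (v ⬝ᵥ p i) = u ⬝ᵥ v := by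
  have mul_transpose : Matrix.of p * (Matrix.of q).transpose = 1 := by
    ext i j
    exact h i j
  calc ∑ i, (u ⬝ᵥ q i) * (v ⬝ᵥ p i)
      = Matrix.vecMul u (Matrix.of q).transpose ⬝ᵥ Matrix.mulVec (Matrix.of p) v :=
        Finset.sum_congr rfl fun i _ ↦ congrArg (_ * ·) (dotProduct_comm v (p i))
    _ = u ⬝ᵥ v := by
        rw [← Matrix.dotProduct_mulVec, Matrix.mulVec_mulVec, mul_eq_one_comm.1 mul_transpose,
          Matrix.one_mulVec]

end DotProduct

section SignedPermutations

variable {n : ℕ}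

lemma vS_true (i : Fin n) : vS (true, i) = stdB n i := by
  simp [vS, rsgn]

lemma vS_negS (a : SIdx n) : vS (negS a) = -vS a := by
  obtain ⟨t, i⟩ := a
  cases t <;> simp [vS, negS, rsgn]

lemma vS_dotProduct_vS (a b : SIdx n) :
    vS a ⬝ᵥ vS b = if a = b then 1 else if a = negS b then -1 else 0 := by
  obtain ⟨t, i⟩ := a
  obtain ⟨u, j⟩ := b
  by_cases hij : i = j <;> cases t <;> cases u <;> simp [vS, stdB, negS, rsgn, hij]

lemma spAct_eq_linearCombination (w : SIdx n ≃ SIdx n) :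
    spAct w = Fintype.linearCombination ℝ fun i ↦ vS (w (true, i)) := rfl

lemma spAct_stdB (w : SIdx n ≃ SIdx n) (i : Fin n) : spAct w (stdB n i) = vS (w (true, i)) := by
  rw [spAct_eq_linearCombination, stdB, Fintype.linearCombination_apply_single, one_smul]

lemma IsSPerm.spAct_vS {w : SIdx n ≃ SIdx n} (hw : IsSPerm w) (a : SIdx n) :
    spAct w (vS a) = vS (w a) := by
  obtain ⟨t, i⟩ := a
  cases t
  · change spAct w (vS (negS (true, i))) = vS (w (negS (true, i)))
    rw [hw, vS_negS, vS_negS, vS_true, ← spAct_stdB, spAct_eq_linearCombination, map_neg]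
  · rw [vS_true, spAct_stdB]

lemma IsSPerm.spAct_trans {w : SIdx n ≃ SIdx n} (hw : IsSPerm w) (v : SIdx n ≃ SIdx n)
    (y : Fin n → ℝ) : spAct (v.trans w) y = spAct w (spAct v y) := by
  calc spAct (v.trans w) y = ∑ i, y i • spAct w (vS (v (true, i))) := by
        simp only [hw.spAct_vS]
        rfl
    _ = spAct w (spAct v y) := by
        simp only [spAct_eq_linearCombination w, ← map_smul, ← map_sum]
        rfl

lemma IsSPerm.vS_apply_dotProduct_vS_apply {w : SIdx n ≃ SIdx n} (hw : IsSPerm w) (i j : Fin n) :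
    vS (w (true, i)) ⬝ᵥ vS (w (true, j)) = if i = j then 1 else 0 := by
  have h_negS : w (true, i) ≠ negS (w (true, j)) := by
    rw [← hw, w.injective.ne_iff]
    simp [negS]
  simp [vS_dotProduct_vS, h_negS]

lemma IsSPerm.spAct_dotProduct_spAct {w : SIdx n ≃ SIdx n} (hw : IsSPerm w) (y z : Fin n → ℝ) :
    spAct w y ⬝ᵥ spAct w z = y ⬝ᵥ z := by
  simp only [spAct, sum_dotProduct, dotProduct_sum, smul_dotProduct, dotProduct_smul,
    hw.vS_apply_dotProduct_vS_apply, smul_eq_mul, mul_ite, mul_one, mul_zero,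
    Finset.sum_ite_eq', Finset.mem_univ, if_true]
  exact dotProduct_comm z y

lemma chiF_eq_sum_vS {J : Finset (SIdx n)} (hJ : Isotropic J) : chiF J = ∑ a ∈ J, vS a := by
  funext i
  have hsum : (∑ a ∈ J, vS a) i =
      (if (true, i) ∈ J then 1 else 0) + if (false, i) ∈ J then -1 else 0 := by
    rw [Finset.sum_apply, ← Finset.sum_ite_mem_eq, Fintype.sum_prod_type, Fintype.sum_bool,
      Fintype.sum_eq_single i fun j hj ↦ by simp [vS, stdB, hj.symm],
      Fintype.sum_eq_single i fun j hj ↦ by simp [vS, stdB, hj.symm]]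
    simp [vS, stdB, rsgn]
  have := hJ i
  rw [hsum, chiF]
  split_ifs <;> simp_all

lemma IsSPerm.isotropic_JwSet {w : SIdx n ≃ SIdx n} (hw : IsSPerm w) (m : Fin n) :
    Isotropic (JwSet w m) := by
  rintro i ⟨hpos, hneg⟩
  obtain ⟨j, -, hj⟩ := Finset.mem_image.1 hpos
  obtain ⟨k, -, hk⟩ := Finset.mem_image.1 hneg
  have hjk : w (true, k) = w (negS (true, j)) := by rw [hw, hj, hk]; rfl
  simpa [negS] using w.injective hjk

end SignedPermutations

section SimpleRoots

variable {n : ℕ}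

lemma simpleRoot_of_lt {i : Fin n} (h : (i : ℕ) + 1 < n) :
    simpleRoot n i = stdB n i - stdB n ⟨i + 1, h⟩ := by
  funext j
  simp [simpleRoot, stdB, Pi.single_apply, Fin.ext_iff]

lemma simpleRoot_of_not_lt {i : Fin n} (h : ¬(i : ℕ) + 1 < n) : simpleRoot n i = stdB n i := by
  funext j
  have hj : (j : ℕ) ≠ i + 1 := by lia
  simp [simpleRoot, stdB, Pi.single_apply, hj]

/-- The simple reflection `s_i` of type `B_n` as a signed permutation (0-indexed): it exchanges
`±i` with `±(i + 1)`, and the last one changes the sign of `i`. -/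
def simpleReflection (i : Fin n) : SIdx n ≃ SIdx n :=
  if h : (i : ℕ) + 1 < n then (Equiv.refl Bool).prodCongr (Equiv.swap i ⟨i + 1, h⟩)
  else Equiv.swap (true, i) (false, i)

lemma simpleReflection_apply_of_lt {i : Fin n} (h : (i : ℕ) + 1 < n) (a : SIdx n) :
    simpleReflection i a = (a.1, Equiv.swap i ⟨i + 1, h⟩ a.2) := by
  simp only [simpleReflection, dif_pos h]
  rfl

lemma simpleReflection_apply_of_not_lt {i : Fin n} (h : ¬(i : ℕ) + 1 < n) (a : SIdx n) :
    simpleReflection i a = if a.2 = i then negS a else a := by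
  obtain ⟨t, j⟩ := a
  simp only [simpleReflection, dif_neg h, Equiv.swap_apply_def, negS]
  cases t <;> grind

lemma simpleReflection_involutive (i : Fin n) : Function.Involutive (simpleReflection i) := by
  rintro ⟨t, j⟩
  unfold simpleReflection
  split_ifs <;> simp

lemma isSPerm_simpleReflection (i : Fin n) : IsSPerm (simpleReflection i) := by
  intro a
  by_cases h : (i : ℕ) + 1 < n
  · simp only [simpleReflection_apply_of_lt h, negS]
  · simp only [simpleReflection_apply_of_not_lt h, negS]
    split_ifs <;> rfl

lemma IsSPerm.trans {v w : SIdx n ≃ SIdx n} (hv : IsSPerm v) (hw : IsSPerm w) :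
    IsSPerm (v.trans w) := fun a ↦ by
  simp only [Equiv.trans_apply, hv a, hw (v a)]

lemma spAct_simpleReflection_stdB_of_lt {i : Fin n} (h : (i : ℕ) + 1 < n) (j : Fin n) :
    spAct (simpleReflection i) (stdB n j) = stdB n (Equiv.swap i ⟨i + 1, h⟩ j) := by
  rw [spAct_stdB, simpleReflection_apply_of_lt h, vS_true]

lemma spAct_simpleReflection_stdB_of_not_lt {i : Fin n} (h : ¬(i : ℕ) + 1 < n) (j : Fin n) :
    spAct (simpleReflection i) (stdB n j) = if j = i then -stdB n j else stdB n j := by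
  rw [spAct_stdB, simpleReflection_apply_of_not_lt h]
  split_ifs
  · rw [vS_negS, vS_true]
  · rw [vS_true]

lemma simpleRoot_dotProduct_self (i : Fin n) :
    simpleRoot n i ⬝ᵥ simpleRoot n i = if (i : ℕ) + 1 < n then 2 else 1 := by
  split_ifs with h
  · have hne : i ≠ ⟨i + 1, h⟩ := by simp [Fin.ext_iff]
    norm_num [simpleRoot_of_lt h, stdB, hne, hne.symm]
  · simp [simpleRoot_of_not_lt h, stdB]

lemma spAct_simpleReflection_stdB (i j : Fin n) :
    spAct (simpleReflection i) (stdB n j) = stdB n j - (2 * (stdB n j ⬝ᵥ simpleRoot n i) /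
      (simpleRoot n i ⬝ᵥ simpleRoot n i)) • simpleRoot n i := by
  rw [simpleRoot_dotProduct_self]
  split_ifs with h
  · have hne : i ≠ ⟨i + 1, h⟩ := by simp [Fin.ext_iff]
    rw [spAct_simpleReflection_stdB_of_lt h, simpleRoot_of_lt h]
    rcases eq_or_ne j i with rfl | hi
    · simp [stdB, hne]
    · rcases eq_or_ne j ⟨i + 1, h⟩ with rfl | hi'
      · simp [stdB, hne.symm]
      · simp [stdB, Equiv.swap_apply_of_ne_of_ne hi hi', hi.symm, hi'.symm]
  · rw [spAct_simpleReflection_stdB_of_not_lt h, simpleRoot_of_not_lt h]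
    split_ifs with hj
    · subst hj
      simp [stdB, two_smul]
    · simp [stdB, Ne.symm hj]

theorem spAct_simpleReflection (i : Fin n) (y : Fin n → ℝ) :
    spAct (simpleReflection i) y = y - (2 * (y ⬝ᵥ simpleRoot n i) /
      (simpleRoot n i ⬝ᵥ simpleRoot n i)) • simpleRoot n i := by
  have hcoeff : ∑ j, y j * (2 * (stdB n j ⬝ᵥ simpleRoot n i) /
      (simpleRoot n i ⬝ᵥ simpleRoot n i)) =
      2 * (y ⬝ᵥ simpleRoot n i) / (simpleRoot n i ⬝ᵥ simpleRoot n i) := by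
    simp only [stdB, single_one_dotProduct, mul_div_assoc', mul_left_comm _ (2 : ℝ),
      ← Finset.sum_div, ← Finset.mul_sum]
    rfl
  calc spAct (simpleReflection i) y
      = ∑ j, y j • spAct (simpleReflection i) (stdB n j) := by simp only [spAct_stdB]; rfl
    _ = _ := by
      simp only [spAct_simpleReflection_stdB, smul_sub, Finset.sum_sub_distrib, smul_smul,
        ← Finset.sum_smul, hcoeff]
      congr 1
      exact (pi_eq_sum_univ' y).symm

lemma spAct_simpleReflection_simpleRoot (i : Fin n) :
    spAct (simpleReflection i) (simpleRoot n i) = -simpleRoot n i := by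
  have hne : simpleRoot n i ⬝ᵥ simpleRoot n i ≠ 0 := by
    rw [simpleRoot_dotProduct_self]
    split_ifs <;> norm_num
  rw [spAct_simpleReflection, mul_div_cancel_right₀ _ hne, two_smul, sub_add_cancel_left]

/-- The fundamental coweight `e_0 + ⋯ + e_m`; these vectors form the basis dual to the simple
roots, and the signed permutation `w` sends them to the vectors `χ_{J^w_m}`. -/
def fundamentalCoweight (m : Fin n) : Fin n → ℝ := fun j ↦ if j ≤ m then 1 else 0

lemma fundamentalCoweight_dotProduct_simpleRoot (m i : Fin n) :
    fundamentalCoweight m ⬝ᵥ simpleRoot n i = if m = i then 1 else 0 := by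
  by_cases h : (i : ℕ) + 1 < n
  · simp only [simpleRoot_of_lt h, dotProduct_sub, stdB, dotProduct_single_one,
      fundamentalCoweight, Fin.le_def, Fin.ext_iff]
    grind
  · simp only [simpleRoot_of_not_lt h, stdB, dotProduct_single_one, fundamentalCoweight,
      Fin.le_def, Fin.ext_iff]
    grind

lemma spAct_simpleReflection_fundamentalCoweight {i m : Fin n} (h : i ≠ m) :
    spAct (simpleReflection i) (fundamentalCoweight m) = fundamentalCoweight m := by
  simp [spAct_simpleReflection, fundamentalCoweight_dotProduct_simpleRoot, h.symm]

lemma IsSPerm.chiF_JwSet {w : SIdx n ≃ SIdx n} (hw : IsSPerm w) (m : Fin n) :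
    chiF (JwSet w m) = spAct w (fundamentalCoweight m) := by
  have hinj : Function.Injective fun j ↦ w (true, j) := w.injective.comp (Prod.mk_right_injective _)
  rw [chiF_eq_sum_vS (hw.isotropic_JwSet m), JwSet, Finset.sum_image hinj.injOn,
    Finset.sum_filter, spAct]
  exact Finset.sum_congr rfl fun j _ ↦ by simp [fundamentalCoweight]

lemma swap_succ_lt_swap_succ {i a b : Fin n} (h : (i : ℕ) + 1 < n) (hab : a < b)
    (hne : ¬(a = i ∧ b = ⟨i + 1, h⟩)) :
    Equiv.swap i ⟨i + 1, h⟩ a < Equiv.swap i ⟨i + 1, h⟩ b := by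
  simp only [Equiv.swap_apply_def, Fin.ext_iff, Fin.lt_def] at *
  grind

end SimpleRoots

section LinearExtensions

variable {n : ℕ}

lemma simpleReflection_trans_involutive (i : Fin n) :
    Function.Involutive fun w : SIdx n ≃ SIdx n ↦ (simpleReflection i).trans w :=
  fun w ↦ Equiv.ext fun a ↦ congrArg w (simpleReflection_involutive i a)

lemma spAct_simpleReflection_mem_BnPos_of_lt {i : Fin n} (h : (i : ℕ) + 1 < n)
    {β : Fin n → ℝ} (hβ : β ∈ BnPos n) (hne : β ≠ simpleRoot n i) :
    spAct (simpleReflection i) β ∈ BnPos n := by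
  rcases hβ with ⟨a, b, hab, t, rfl⟩ | ⟨a, rfl⟩
  · have himage : spAct (simpleReflection i) (stdB n a + rsgn t • stdB n b) =
        stdB n (Equiv.swap i ⟨i + 1, h⟩ a) + rsgn t • stdB n (Equiv.swap i ⟨i + 1, h⟩ b) := by
      simp only [← spAct_simpleReflection_stdB_of_lt h, spAct_eq_linearCombination, map_add,
        map_smul]
    rw [himage]
    by_cases hswap : a = i ∧ b = ⟨i + 1, h⟩
    · obtain ⟨rfl, rfl⟩ := hswap
      cases t
      · exact absurd (by simp [simpleRoot_of_lt h, rsgn, sub_eq_add_neg]) hne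
      · exact Or.inl ⟨a, _, hab, true, by simp [rsgn, add_comm]⟩
    · exact Or.inl ⟨_, _, swap_succ_lt_swap_succ h hab hswap, t, rfl⟩
  · exact Or.inr ⟨_, spAct_simpleReflection_stdB_of_lt h a⟩

lemma spAct_simpleReflection_mem_BnPos_of_not_lt {i : Fin n} (h : ¬(i : ℕ) + 1 < n)
    {β : Fin n → ℝ} (hβ : β ∈ BnPos n) (hne : β ≠ simpleRoot n i) :
    spAct (simpleReflection i) β ∈ BnPos n := by
  rcases hβ with ⟨a, b, hab, t, rfl⟩ | ⟨a, rfl⟩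
  · have ha : a ≠ i := by
      rintro rfl
      lia
    have himage : spAct (simpleReflection i) (stdB n a + rsgn t • stdB n b) =
        stdB n a + rsgn t • if b = i then -stdB n b else stdB n b := by
      rw [← spAct_simpleReflection_stdB_of_not_lt h, spAct_eq_linearCombination, map_add,
        map_smul, ← spAct_eq_linearCombination, spAct_simpleReflection_stdB_of_not_lt h,
        if_neg ha]
    rw [himage]
    split_ifs
    · exact Or.inl ⟨a, b, hab, !t, by cases t <;> simp [rsgn]⟩
    · exact Or.inl ⟨a, b, hab, t, rfl⟩
  · have ha : a ≠ i := by
      rintro rfl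
      exact hne (simpleRoot_of_not_lt h).symm
    exact Or.inr ⟨a, by rw [spAct_simpleReflection_stdB_of_not_lt h, if_neg ha]⟩

theorem spAct_simpleReflection_mem_BnPos {i : Fin n} {β : Fin n → ℝ} (hβ : β ∈ BnPos n)
    (hne : β ≠ simpleRoot n i) : spAct (simpleReflection i) β ∈ BnPos n := by
  by_cases h : (i : ℕ) + 1 < n
  · exact spAct_simpleReflection_mem_BnPos_of_lt h hβ hne
  · exact spAct_simpleReflection_mem_BnPos_of_not_lt h hβ hne

variable {P : Set (Fin n → ℝ)} {w : SIdx n ≃ SIdx n}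

lemma isLinExt_of_mem_linExts (hw : w ∈ linExts n P) : IsLinExt P w :=
  (Finset.mem_filter.1 hw).2

lemma IsLinExt.simpleReflection_trans (hw : IsLinExt P w) {i : Fin n}
    (hi : spAct w (simpleRoot n i) ∉ P) : IsLinExt P ((simpleReflection i).trans w) := by
  refine ⟨(isSPerm_simpleReflection i).trans hw.1, fun α hα ↦ ?_⟩
  obtain ⟨β, hβ, rfl⟩ := hw.2 α hα
  have hne : β ≠ simpleRoot n i := by
    rintro rfl
    exact hi hα
  have htrans : (simpleReflection i).trans ((simpleReflection i).trans w) = w :=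
    simpleReflection_trans_involutive i w
  refine ⟨spAct (simpleReflection i) β, spAct_simpleReflection_mem_BnPos hβ hne, ?_⟩
  rw [← ((isSPerm_simpleReflection i).trans hw.1).spAct_trans, htrans]

lemma IsSPerm.spAct_simpleReflection_trans_simpleRoot (hw : IsSPerm w) (i : Fin n) :
    spAct ((simpleReflection i).trans w) (simpleRoot n i) = -spAct w (simpleRoot n i) := by
  rw [hw.spAct_trans, spAct_simpleReflection_simpleRoot, spAct_eq_linearCombination, map_neg]

lemma IsSPerm.spAct_fundamentalCoweight_dotProduct_spAct_simpleRoot (hw : IsSPerm w)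
    (m i : Fin n) :
    spAct w (fundamentalCoweight m) ⬝ᵥ spAct w (simpleRoot n i) = if m = i then 1 else 0 := by
  rw [hw.spAct_dotProduct_spAct, fundamentalCoweight_dotProduct_simpleRoot]

lemma IsSPerm.sum_dotProduct_simpleRoot_mul_dotProduct_fundamentalCoweight (hw : IsSPerm w)
    (v x : Fin n → ℝ) :
    ∑ i, (v ⬝ᵥ spAct w (simpleRoot n i)) * (x ⬝ᵥ spAct w (fundamentalCoweight i)) = v ⬝ᵥ x :=
  sum_dotProduct_mul_dotProduct_of_biorthogonal
    hw.spAct_fundamentalCoweight_dotProduct_spAct_simpleRoot v x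

lemma IsSPerm.exists_dotProduct_spAct_simpleRoot_ne_zero (hw : IsSPerm w) {v : Fin n → ℝ}
    (hv : v ≠ 0) : ∃ i, v ⬝ᵥ spAct w (simpleRoot n i) ≠ 0 := by
  by_contra! h
  refine hv (dotProduct_self_eq_zero.1 ?_)
  rw [← hw.sum_dotProduct_simpleRoot_mul_dotProduct_fundamentalCoweight v v]
  exact Finset.sum_eq_zero fun i _ ↦ by rw [h i, zero_mul]

lemma isWallCrossing_linExts {v : Fin n → ℝ} (hv : ∀ α ∈ P, v ⬝ᵥ α = 0) :
    IsWallCrossing (linExts n P) (fun i w ↦ (simpleReflection i).trans w)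
      fun w i ↦ v ⬝ᵥ spAct w (simpleRoot n i) where
  involutive := simpleReflection_trans_involutive
  mem w hw i hi := Finset.mem_filter.2 ⟨Finset.mem_univ _,
    (isLinExt_of_mem_linExts hw).simpleReflection_trans fun hmem ↦ hi (hv _ hmem)⟩
  neg w hw i := by
    rw [(isLinExt_of_mem_linExts hw).1.spAct_simpleReflection_trans_simpleRoot, dotProduct_neg]

lemma IsSPerm.spAct_simpleReflection_trans (hw : IsSPerm w) (i : Fin n) (y : Fin n → ℝ) :
    spAct ((simpleReflection i).trans w) y = spAct w y - (2 * (y ⬝ᵥ simpleRoot n i) /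
      (simpleRoot n i ⬝ᵥ simpleRoot n i)) • spAct w (simpleRoot n i) := by
  rw [hw.spAct_trans, spAct_simpleReflection, spAct_eq_linearCombination, map_sub, map_smul]

lemma IsSPerm.smul_simpleRoot_sub_smul_simpleRoot_ne_zero (hw : IsSPerm w) {i j : Fin n}
    (hij : i ≠ j) {c : ℝ} (hc : c ≠ 0) (d : ℝ) :
    c • spAct w (simpleRoot n j) - d • spAct w (simpleRoot n i) ≠ 0 := by
  intro h
  have hdot := congrArg (spAct w (fundamentalCoweight j) ⬝ᵥ ·) h
  simp only [dotProduct_sub, dotProduct_smul,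
    hw.spAct_fundamentalCoweight_dotProduct_spAct_simpleRoot, if_neg hij.symm] at hdot
  exact hc (by simpa using hdot)

theorem sum_linExts_prod_inv_dotProduct_simpleRoot_eq_zero (hspan : Submodule.span ℝ P ≠ ⊤)
    {x : Fin n → ℝ} (hx : ∀ w ∈ linExts n P, ∀ i, x ⬝ᵥ spAct w (simpleRoot n i) ≠ 0) :
    ∑ w ∈ linExts n P, ∏ i, (x ⬝ᵥ spAct w (simpleRoot n i))⁻¹ = 0 := by
  obtain ⟨v, hv, hvP⟩ := exists_ne_zero_forall_dotProduct_eq_zero hspan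
  have generic : ∀ᶠ z in residual (Fin n → ℝ), ∀ w ∈ linExts n P, ∀ i j, i ≠ j →
      v ⬝ᵥ spAct w (simpleRoot n i) ≠ 0 →
      z ⬝ᵥ ((v ⬝ᵥ spAct w (simpleRoot n i)) • spAct w (simpleRoot n j) -
        (v ⬝ᵥ spAct w (simpleRoot n j)) • spAct w (simpleRoot n i)) ≠ 0 := by
    simp only [Filter.eventually_all_finset, Filter.eventually_all]
    intro w hw i j hij hvi
    exact eventually_residual_dotProduct_ne_zero <|
      (isLinExt_of_mem_linExts hw).1.smul_simpleRoot_sub_smul_simpleRoot_ne_zero hij hvi _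
  refine sum_prod_inv_dotProduct_eq_zero_of_eventually_residual hx ?_
  filter_upwards [generic] with z hz hne
  refine (isWallCrossing_linExts hvP).sum_prod_inv_eq_zero_of_shear (fun w hw i ↦ ?_)
    (fun w hw i j _ ↦ ?_) hne
    (fun w hw ↦ (isLinExt_of_mem_linExts hw).1.exists_dotProduct_spAct_simpleRoot_ne_zero hv)
    fun w hw i j hij hvi ↦ ?_
  · rw [(isLinExt_of_mem_linExts hw).1.spAct_simpleReflection_trans_simpleRoot, dotProduct_neg]
  · simp only [(isLinExt_of_mem_linExts hw).1.spAct_simpleReflection_trans, dotProduct_sub,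
      dotProduct_smul, smul_eq_mul]
    exact ⟨_, rfl, rfl⟩
  · simpa [mul_comm] using hz w hw i j hij hvi

theorem sum_linExts_prod_inv_dotProduct_fundamentalCoweight_eq_zero
    (hspan : Submodule.span ℝ P ≠ ⊤) {x : Fin n → ℝ}
    (hx : ∀ w ∈ linExts n P, ∀ m, x ⬝ᵥ spAct w (fundamentalCoweight m) ≠ 0) :
    ∑ w ∈ linExts n P, ∏ m, (x ⬝ᵥ spAct w (fundamentalCoweight m))⁻¹ = 0 := by
  obtain ⟨v, hv, hvP⟩ := exists_ne_zero_forall_dotProduct_eq_zero hspan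
  refine sum_prod_inv_dotProduct_eq_zero_of_eventually_residual hx ?_
  filter_upwards [eventually_residual_dotProduct_ne_zero hv] with z hz hne
  refine (isWallCrossing_linExts hvP).sum_prod_inv_eq_zero_of_sum_mul_eq
    (dotProduct_comm z v ▸ hz)
    (fun w hw ↦ (isLinExt_of_mem_linExts hw).1
      |>.sum_dotProduct_simpleRoot_mul_dotProduct_fundamentalCoweight v z)
    (fun w hw i m him ↦ ?_) hne
  rw [(isLinExt_of_mem_linExts hw).1.spAct_trans,
    spAct_simpleReflection_fundamentalCoweight him]

end LinearExtensions

theorem statement_4_general (n : ℕ) (P : Set (Fin n → ℝ))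
    (hspan : Submodule.span ℝ P ≠ ⊤) :
    (∀ x : Fin n → ℝ,
      (∀ w ∈ linExts n P, ∀ i : Fin n, dotR x (spAct w (simpleRoot n i)) ≠ 0) →
      ∑ w ∈ linExts n P, ∏ i : Fin n, (dotR x (spAct w (simpleRoot n i)))⁻¹ = 0) ∧
    ∀ x : Fin n → ℝ,
      (∀ w ∈ linExts n P, ∀ m : Fin n, dotR x (chiF (JwSet w m)) ≠ 0) →
      ∑ w ∈ linExts n P, ∏ m : Fin n, (dotR x (chiF (JwSet w m)))⁻¹ = 0 := by
  refine ⟨fun x ↦ sum_linExts_prod_inv_dotProduct_simpleRoot_eq_zero hspan, fun x hx ↦ ?_⟩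
  have hchi : ∀ w ∈ linExts n P, ∀ m,
      dotR x (chiF (JwSet w m)) = x ⬝ᵥ spAct w (fundamentalCoweight m) := fun w hw m ↦
    congrArg (dotR x) ((isLinExt_of_mem_linExts hw).1.chiF_JwSet m)
  rw [Finset.sum_congr rfl fun w hw ↦ Finset.prod_congr rfl fun m _ ↦
    congrArg (·⁻¹) (hchi w hw m)]
  exact sum_linExts_prod_inv_dotProduct_fundamentalCoweight_eq_zero hspan
    fun w hw m ↦ hchi w hw m ▸ hx w hw m

theorem statement_4 (n : ℕ) (hn : 1 ≤ n) (P : Set (Fin n → ℝ)) (hP : IsSignedPoset n P)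
    (hspan : Submodule.span ℝ P ≠ ⊤) :
    (∀ x : Fin n → ℝ,
      (∀ w ∈ linExts n P, ∀ i : Fin n, dotR x (spAct w (simpleRoot n i)) ≠ 0) →
      ∑ w ∈ linExts n P, ∏ i : Fin n, (dotR x (spAct w (simpleRoot n i)))⁻¹ = 0) ∧
    ∀ x : Fin n → ℝ,
      (∀ w ∈ linExts n P, ∀ m : Fin n, dotR x (chiF (JwSet w m)) ≠ 0) →
      ∑ w ∈ linExts n P, ∏ m : Fin n, (dotR x (chiF (JwSet w m)))⁻¹ = 0 :=
  statement_4_general n P hspan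
end
end

section
/- For every signed poset P ⊆ Φ_{B_n}, the weight cone K^wt_P spans ℝ^n as a real vector space; in fact there exist n linearly independent vectors ε^{(1)}, …, ε^{(n)} ∈ {−1,0,1}^n with ⟨ε^{(k)}, α⟩ ≥ 0 for all α ∈ P and all 1 ≤ k ≤ n. -/
open scoped Classical

noncomputable section

/-! A signed poset `P` generates a cone containing no `-α` with `α ∈ P`, so by Hahn–Banach some
`f ∈ ℝ^n` pairs strictly positively with all of `P`. Sort the coordinates by `|f i|` and let `ε_k`
be the sign vector of `f` with the `k` coordinates of smallest absolute value replaced by `0`. The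
sign of `⟨f, ±e_i ± e_j⟩` is decided by the coordinate of larger absolute value, which is also the
last of the two to be erased, so every `ε_k` pairs nonnegatively with `P`; and the `ε_k` are
independent because they form a triangular matrix. -/

section Separation

theorem exists_neg_mem_hull_of_zero_mem_convexHull {R E : Type*} [Field R] [LinearOrder R]
    [IsStrictOrderedRing R] [AddCommGroup E] [Module R E] {S : Set E}
    (h : (0 : E) ∈ convexHull R S) : ∃ a ∈ S, -a ∈ PointedCone.hull R S := by
  obtain ⟨ι, _, w, z, hw_nonneg, hw_sum, hzS, hwz⟩ := mem_convexHull_iff_exists_fintype.1 h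
  obtain ⟨m, -, hwm⟩ : ∃ m ∈ Finset.univ, w m ≠ 0 :=
    Finset.exists_ne_zero_of_sum_ne_zero (hw_sum ▸ one_ne_zero)
  have hneg : -z m = (w m)⁻¹ • ∑ l ∈ Finset.univ.erase m, w l • z l := by
    rw [eq_inv_smul_iff₀ hwm, smul_neg, neg_eq_iff_add_eq_zero,
      Finset.add_sum_erase _ (fun l => w l • z l) (Finset.mem_univ m), hwz]
  refine ⟨z m, hzS m, hneg ▸ PointedCone.smul_mem _ (inv_nonneg.2 (hw_nonneg m)) ?_⟩
  exact sum_mem fun l _ =>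
    PointedCone.smul_mem _ (hw_nonneg l) (PointedCone.subset_hull (hzS l))

theorem exists_forall_pos_of_forall_neg_notMem_hull {E : Type*} [AddCommGroup E] [Module ℝ E]
    [TopologicalSpace E] [IsTopologicalAddGroup E] [ContinuousSMul ℝ E] [LocallyConvexSpace ℝ E]
    [T2Space E] {S : Set E} (hS : S.Finite) (hneg : ∀ a ∈ S, -a ∉ PointedCone.hull ℝ S) :
    ∃ g : E →L[ℝ] ℝ, ∀ a ∈ S, 0 < g a := by
  have hzero : (0 : E) ∉ convexHull ℝ S := fun h =>
    let ⟨a, haS, ha⟩ := exists_neg_mem_hull_of_zero_mem_convexHull h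
    hneg a haS ha
  obtain ⟨g, u, hu, hg⟩ := geometric_hahn_banach_point_closed (convex_convexHull ℝ S)
    (hS.isClosed_convexHull (𝕜 := ℝ)) hzero
  exact ⟨g, fun a ha => (map_zero g ▸ hu).trans (hg a (subset_convexHull ℝ S ha))⟩

end Separation

section Signs

theorem rsgn_not (s : Bool) : rsgn (!s) = -rsgn s := by
  cases s <;> simp [rsgn]

theorem rsgn_eq_neg_one_or_one (s : Bool) : rsgn s = -1 ∨ rsgn s = 1 := by
  cases s <;> simp [rsgn]

theorem abs_rsgn_mul (s : Bool) (x : ℝ) : |rsgn s * x| = |x| := by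
  cases s <;> simp [rsgn]

theorem rsgn_mul_rsgn_decide_nonneg {s : Bool} {x : ℝ} (h : 0 < rsgn s * x) :
    rsgn s * rsgn (decide (0 ≤ x)) = 1 := by
  cases s
  · have hx : ¬ 0 ≤ x := by simpa [rsgn] using h
    simp [rsgn, hx]
  · have hx : 0 ≤ x := by simpa [rsgn] using h.le
    simp [rsgn, hx]

theorem pos_of_add_pos_of_abs_le {G : Type*} [AddCommGroup G] [LinearOrder G]
    [IsOrderedAddMonoid G] {x y : G} (hadd : 0 < x + y) (habs : |y| ≤ |x|) : 0 < x := by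
  by_contra! hx
  have hyx : y ≤ -x := (le_abs_self y).trans (habs.trans_eq (abs_of_nonpos hx))
  exact hadd.not_ge (by simpa using add_le_add_right hyx x)

end Signs

section TailSign

variable {ι κ : Type*}

/-- The sign vector of `f` truncated to the coordinates whose rank, as given by `r`, is at least
`k`. The sign of `0` is taken to be `1`, so that no retained entry vanishes. -/
def tailSign [LE κ] (r : ι → κ) (f : ι → ℝ) (k : κ) (i : ι) : ℝ :=
  if k ≤ r i then rsgn (decide (0 ≤ f i)) else 0

theorem tailSign_eq_neg_one_or_zero_or_one [LE κ] (r : ι → κ) (f : ι → ℝ) (k : κ) (i : ι) :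
    tailSign r f k i = -1 ∨ tailSign r f k i = 0 ∨ tailSign r f k i = 1 := by
  unfold tailSign
  split_ifs
  · exact (rsgn_eq_neg_one_or_one _).imp_right Or.inr
  · exact Or.inr (Or.inl rfl)

theorem abs_tailSign_le_one [LE κ] (r : ι → κ) (f : ι → ℝ) (k : κ) (i : ι) :
    |tailSign r f k i| ≤ 1 := by
  rcases tailSign_eq_neg_one_or_zero_or_one r f k i with h | h | h <;> simp [h]

theorem rsgn_mul_tailSign_of_pos [LE κ] (r : ι → κ) {f : ι → ℝ} (k : κ) {i : ι} {s : Bool}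
    (h : 0 < rsgn s * f i) : rsgn s * tailSign r f k i = if k ≤ r i then 1 else 0 := by
  rw [tailSign, mul_ite, rsgn_mul_rsgn_decide_nonneg h, mul_zero]

theorem rsgn_mul_tailSign_add_nonneg [LinearOrder κ] {r : ι → κ} {f : ι → ℝ}
    (hr : ∀ i j, r i ≤ r j → |f i| ≤ |f j|) (k : κ) {i j : ι} {s t : Bool}
    (h : 0 < rsgn s * f i + rsgn t * f j) :
    0 ≤ rsgn s * tailSign r f k i + rsgn t * tailSign r f k j := by
  wlog hji : r j ≤ r i generalizing i j s t
  · rw [add_comm] at h ⊢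
    exact this h (le_of_not_ge hji)
  have hi : 0 < rsgn s * f i :=
    pos_of_add_pos_of_abs_le h (by simpa only [abs_rsgn_mul] using hr j i hji)
  rw [rsgn_mul_tailSign_of_pos r k hi]
  split_ifs with hki
  · have hj : |rsgn t * tailSign r f k j| ≤ 1 :=
      (abs_rsgn_mul _ _).trans_le (abs_tailSign_le_one r f k j)
    linarith [neg_le_of_abs_le hj]
  · have hkj : ¬ k ≤ r j := fun hkj => hki (hkj.trans hji)
    simp [tailSign, hkj]

theorem linearIndependent_tailSign [Finite κ] [LinearOrder κ] (e : ι ≃ κ) (f : ι → ℝ) :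
    LinearIndependent ℝ (tailSign e f) := by
  have := Fintype.ofFinite κ
  let A : Matrix κ κ ℝ := fun k l => tailSign e f k (e.symm l)
  have hA : A.IsUpperTriangular := fun k l hlk => by
    simpa [A, tailSign] using fun hkl : k ≤ l => absurd hlk hkl.not_gt
  have hdiag (k : κ) : A k k ≠ 0 := by
    rcases rsgn_eq_neg_one_or_one (decide (0 ≤ f (e.symm k))) with h | h <;>
      simp [A, tailSign, h]
  have hdet : A.det ≠ 0 := by
    rw [Matrix.det_of_isUpperTriangular hA]
    exact Finset.prod_ne_zero_iff.2 fun k _ => hdiag k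
  exact LinearIndependent.of_comp (LinearMap.funLeft ℝ ℝ e.symm)
    (Matrix.linearIndependent_rows_of_det_ne_zero hdet)

end TailSign

section SignedPoset

variable {n : ℕ}

theorem dotR_add (x y z : Fin n → ℝ) : dotR x (y + z) = dotR x y + dotR x z :=
  dotProduct_add x y z

theorem dotR_rsgn_smul_stdB (x : Fin n → ℝ) (s : Bool) (i : Fin n) :
    dotR x (rsgn s • stdB n i) = rsgn s * x i := by
  change x ⬝ᵥ (rsgn s • Pi.single i 1) = _
  rw [dotProduct_smul, dotProduct_single_one, smul_eq_mul]

theorem dotR_tailSign_nonneg {κ : Type*} [LinearOrder κ] {r : Fin n → κ} {f α : Fin n → ℝ}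
    (hr : ∀ i j, r i ≤ r j → |f i| ≤ |f j|) (k : κ) (hα : α ∈ BnRoots n) (hf : 0 < dotR f α) :
    0 ≤ dotR (tailSign r f k) α := by
  rcases hα with ⟨i, j, -, s, t, rfl⟩ | ⟨i, s, rfl⟩
  · simp only [dotR_add, dotR_rsgn_smul_stdB] at hf ⊢
    exact rsgn_mul_tailSign_add_nonneg hr k hf
  · rw [dotR_rsgn_smul_stdB] at hf ⊢
    rw [rsgn_mul_tailSign_of_pos r k hf]
    split_ifs <;> norm_num

theorem neg_mem_BnRoots {α : Fin n → ℝ} (hα : α ∈ BnRoots n) : -α ∈ BnRoots n := by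
  rcases hα with ⟨i, j, hij, s, t, rfl⟩ | ⟨i, s, rfl⟩
  · exact Or.inl ⟨i, j, hij, !s, !t, by rw [rsgn_not, rsgn_not, neg_smul, neg_smul, neg_add]⟩
  · exact Or.inr ⟨i, !s, by rw [rsgn_not, neg_smul]⟩

theorem finite_BnRoots (n : ℕ) : (BnRoots n).Finite := by
  have hvS : (Set.range (vS (n := n))).Finite := Set.finite_range _
  refine ((hvS.add hvS).union hvS).subset ?_
  rintro _ (⟨i, j, -, s, t, rfl⟩ | ⟨i, s, rfl⟩)
  · exact Or.inl (Set.add_mem_add ⟨(s, i), rfl⟩ ⟨(t, j), rfl⟩)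
  · exact Or.inr ⟨(s, i), rfl⟩

theorem hull_subset_nnSpan (S : Set (Fin n → ℝ)) : (PointedCone.hull ℝ S : Set _) ⊆ nnSpan S := by
  intro x hx
  obtain ⟨m, c, β, rfl⟩ := Submodule.mem_span_set'.1 hx
  exact ⟨m, fun l => c l, fun l => β l, fun l => (c l).2, fun l => (β l).2, rfl⟩

theorem IsSignedPoset.exists_forall_dotR_pos {P : Set (Fin n → ℝ)} (hP : IsSignedPoset n P) :
    ∃ f : Fin n → ℝ, ∀ α ∈ P, 0 < dotR f α := by
  obtain ⟨hroots, hantisymm, hclosed⟩ := hP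
  have hneg : ∀ α ∈ P, -α ∉ PointedCone.hull ℝ P := fun α hα h =>
    hantisymm α hα (hclosed _ (neg_mem_BnRoots (hroots hα)) (hull_subset_nnSpan P h))
  obtain ⟨g, hg⟩ :=
    exists_forall_pos_of_forall_neg_notMem_hull ((finite_BnRoots n).subset hroots) hneg
  obtain ⟨f, hf⟩ := (dotProductEquiv ℝ (Fin n)).surjective g.toLinearMap
  exact ⟨f, fun α hα => (hg α hα).trans_eq (LinearMap.congr_fun hf α).symm⟩

theorem span_weightCone_eq_top_of_linearIndependent {P : Set (Fin n → ℝ)}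
    {ε : Fin n → Fin n → ℝ} (hε : LinearIndependent ℝ ε) (hmem : ∀ m, ε m ∈ weightCone P) :
    Submodule.span ℝ (weightCone P) = ⊤ := by
  rw [eq_top_iff, ← hε.span_eq_top_of_card_eq_finrank' (by simp)]
  exact Submodule.span_mono (Set.range_subset_iff.2 hmem)

end SignedPoset

theorem statement_6 (n : ℕ) (hn : 1 ≤ n) (P : Set (Fin n → ℝ)) (hP : IsSignedPoset n P) :
    Submodule.span ℝ (weightCone P) = ⊤ ∧
    ∃ ε : Fin n → (Fin n → ℝ), LinearIndependent ℝ ε ∧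
      ∀ m : Fin n, (∀ i : Fin n, ε m i = -1 ∨ ε m i = 0 ∨ ε m i = 1) ∧
        ∀ α ∈ P, 0 ≤ dotR (ε m) α := by
  obtain ⟨f, hf⟩ := hP.exists_forall_dotR_pos
  let σ : Equiv.Perm (Fin n) := Tuple.sort fun i => |f i|
  have hσ : ∀ i j, σ.symm i ≤ σ.symm j → |f i| ≤ |f j| := fun i j hij => by
    simpa [σ] using Tuple.monotone_sort (fun i => |f i|) hij
  have hε : LinearIndependent ℝ (tailSign σ.symm f) := linearIndependent_tailSign σ.symm f
  have hcone : ∀ m, tailSign σ.symm f m ∈ weightCone P := fun m α hα =>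
    dotR_tailSign_nonneg hσ m (hP.1 hα) (hf α hα)
  exact ⟨span_weightCone_eq_top_of_linearIndependent hε hcone, tailSign σ.symm f, hε,
    fun m => ⟨tailSign_eq_neg_one_or_zero_or_one σ.symm f m, hcone m⟩⟩
end
end
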